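/- Fix a > 7.5 and c > 0, and suppose n > max(4096, a + 3.5) and n/log n > 3(1+2c)(1/2+2c)/c. Let (X_0, Y_0) be a pair of M_n-valued random variables such that Y_0 is distributed according to U_n and ‖X_0 − Y_0‖_1 ≤ n^{−a} almost surely, where ‖X − Y‖_1 = ∑_{i,j} |X[i,j] − Y[i,j]|. Then for every integer T ≥ (1/2 + 2c)·n·log n there exists a coupling (X_t, Y_t)_{0 ≤ t ≤ T} extending (X_0, Y_0), in which the path (X_0, …, X_T) has the law of T steps of the Gibbs sampler on M_n started from X_0 and the path (Y_0, …, Y_T) has the law of T steps of the Gibbs sampler on M_n started from Y_0, such that P[X_T ≠ Y_T] ≤ 10·n^{3.75 − a/2} + n^{−c}. -/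

import Mathlib

open MeasureTheory

noncomputable section

/-- Uniform probability measure on a finset. -/
def unifOn {α : Type*} [MeasurableSpace α] (s : Finset α) : Measure α :=
  (s.card : ENNReal)⁻¹ • ∑ a ∈ s, Measure.dirac a

/-- Total variation distance between two measures. -/
def tvDist {α : Type*} [MeasurableSpace α] (μ ν : Measure α) : ℝ :=
  ⨆ A : {A : Set α // MeasurableSet A}, ((μ A).toReal - (ν A).toReal)

/-- The set `M_n` of nonnegative `n × 2` matrices with row sums `2` and column sums `n`. -/
def MSet (n : ℕ) : Set (Fin n × Fin 2 → ℝ) :=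
  {x | (∀ p, 0 ≤ x p) ∧ (∀ i : Fin n, x (i, 0) + x (i, 1) = 2) ∧
    (∀ j : Fin 2, ∑ i : Fin n, x (i, j) = n)}

/-- The uniform (normalized `(n-1)`-dimensional Hausdorff) measure on `M_n`. -/
def UM (n : ℕ) : Measure (Fin n × Fin 2 → ℝ) :=
  (μH[(n : ℝ) - 1] (MSet n))⁻¹ • (μH[(n : ℝ) - 1]).restrict (MSet n)

/-- One step of the Gibbs sampler on `M_n`, updating the pair of rows `u.1 = (i, j)`
using the uniform variable `u.2 = λ`. -/
def stepM (n : ℕ) (x : Fin n × Fin 2 → ℝ) (u : (Fin n × Fin n) × ℝ) :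
    Fin n × Fin 2 → ℝ := fun p =>
  let i := u.1.1
  let j := u.1.2
  let l := u.2
  let d := 2 - x (i, 0) - x (j, 0)
  if p = (i, 0) then (if 0 ≤ d then l * (2 - d) else 2 * l - (1 - l) * d)
  else if p = (j, 0) then (if 0 ≤ d then (1 - l) * (2 - d) else 2 * (1 - l) - l * d)
  else if p = (i, 1) then (if 0 ≤ d then 2 * (1 - l) + l * d else (1 - l) * (2 + d))
  else if p = (j, 1) then (if 0 ≤ d then 2 * l + (1 - l) * d else l * (2 + d))
  else x p

/-- The set of ordered pairs `(i, j)` with `i < j`. -/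
def pairsF (n : ℕ) : Finset (Fin n × Fin n) := Finset.univ.filter fun p => p.1 < p.2

/-- Law of the random update datum: `(i, j)` uniform among pairs `i < j`, and
`λ` uniform on `[0,1]`. -/
def driveM (n : ℕ) : Measure ((Fin n × Fin n) × ℝ) :=
  (unifOn (pairsF n)).prod ((volume : Measure ℝ).restrict (Set.Icc 0 1))

/-- Law of the Gibbs sampler on `M_n` after `T` steps started at `x`. -/
def lawM (n : ℕ) (x : Fin n × Fin 2 → ℝ) (T : ℕ) : Measure (Fin n × Fin 2 → ℝ) :=
  Measure.map (fun ω : Fin T → (Fin n × Fin n) × ℝ => (List.ofFn ω).foldl (stepM n) x)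
    (Measure.pi fun _ => driveM n)

/-- Law of the `(T+1)`-step path of the Gibbs sampler on `M_n` with initial distribution `μ`. -/
def pathM (n T : ℕ) (μ : Measure (Fin n × Fin 2 → ℝ)) :
    Measure (Fin (T + 1) → Fin n × Fin 2 → ℝ) :=
  Measure.map (fun p : (Fin n × Fin 2 → ℝ) × (Fin T → (Fin n × Fin n) × ℝ) =>
      fun s : Fin (T + 1) => ((List.ofFn p.2).take s).foldl (stepM n) p.1)
    (μ.prod (Measure.pi fun _ => driveM n))


section helpers
variable {n : ℕ}

/-- Lebesgue measure on the unit interval. -/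
def I01 : Measure ℝ := (volume : Measure ℝ).restrict (Set.Icc 0 1)

instance : IsProbabilityMeasure I01 := by
  constructor; simp [I01]

/-- reduction modulo one, fixing the closed unit interval -/
def wrap1 (u : ℝ) : ℝ := if 0 ≤ u ∧ u ≤ 1 then u else Int.fract u

lemma measurable_wrap1 : Measurable wrap1 := by
  unfold wrap1
  refine Measurable.ite ?_ measurable_id measurable_fract
  exact (measurableSet_Icc : MeasurableSet (Set.Icc (0:ℝ) 1))

lemma fract_vol (A : Set ℝ) (hA : MeasurableSet A) (t : ℝ) :
    volume (Int.fract ⁻¹' A ∩ Set.Ioc t (t+1)) = volume (A ∩ Set.Icc 0 1) := by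
  have hm : MeasurableSet ((Int.fract : ℝ → ℝ) ⁻¹' A) := measurable_fract hA
  have h := (isAddFundamentalDomain_Ioc (μ := (volume : Measure ℝ)) (one_pos) t).measure_set_eq
    (isAddFundamentalDomain_Ioc (μ := (volume : Measure ℝ)) (one_pos) 0) hm (by
      rintro ⟨g, hg⟩
      obtain ⟨k, rfl⟩ := hg
      ext x
      simp only [Set.mem_preimage]
      show Int.fract (k • (1:ℝ) + x) ∈ A ↔ _
      rw [zsmul_one, add_comm, Int.fract_add_intCast])
  rw [h]
  apply measure_congr
  have h0 : ∀ᵐ x : ℝ, x ≠ 0 := by simp [ae_iff]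
  have h1 : ∀ᵐ x : ℝ, x ≠ 1 := by simp [ae_iff]
  filter_upwards [h0, h1] with x hx0 hx1
  apply propext
  show (Int.fract x ∈ A ∧ (0 < x ∧ x ≤ 0 + 1)) ↔ (x ∈ A ∧ (0 ≤ x ∧ x ≤ 1))
  constructor
  · rintro ⟨h, h2, h3⟩
    rw [Int.fract_eq_self.2 ⟨h2.le, lt_of_le_of_ne (by linarith) hx1⟩] at h
    exact ⟨h, h2.le, by linarith⟩
  · rintro ⟨h, h2, h3⟩
    rw [Int.fract_eq_self.2 ⟨h2, lt_of_le_of_ne (by linarith) hx1⟩]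
    exact ⟨h, lt_of_le_of_ne h2 (Ne.symm hx0), by linarith⟩

lemma map_wrap1 (β : ℝ) : I01.map (fun z => wrap1 (β + z)) = I01 := by
  ext A hA
  have hmeas : Measurable (fun z => wrap1 (β + z)) := measurable_wrap1.comp (measurable_const_add β)
  rw [Measure.map_apply hmeas hA, I01, Measure.restrict_apply (hmeas hA), Measure.restrict_apply hA,
    ← fract_vol A hA β, ← measure_preimage_add volume β (Int.fract ⁻¹' A ∩ Set.Ioc β (β+1))]
  apply measure_congr
  have h0 : ∀ᵐ x : ℝ, x ≠ 0 := by simp [ae_iff]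
  have h1 : ∀ᵐ x : ℝ, x ≠ 1 - β := by simp [ae_iff]
  filter_upwards [h0, h1] with x hx0 hx1
  apply propext
  show (wrap1 (β + x) ∈ A ∧ (0 ≤ x ∧ x ≤ 1)) ↔ (Int.fract (β + x) ∈ A ∧ (β < β + x ∧ β + x ≤ β + 1))
  have : wrap1 (β + x) = Int.fract (β + x) := by
    unfold wrap1
    split_ifs with h
    · rw [Int.fract_eq_self.2 ⟨h.1, lt_of_le_of_ne h.2 (by intro h'; apply hx1; linarith)⟩]
    · rfl
  rw [this]
  constructor
  · rintro ⟨h, h2, h3⟩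
    exact ⟨h, by linarith [lt_of_le_of_ne h2 (Ne.symm hx0)], by linarith⟩
  · rintro ⟨h, h2, h3⟩
    exact ⟨h, by linarith, by linarith⟩

/-- uniform variable which equals `α W` unless `V > α` -/
def zmix (α : ℝ) (w : ℝ × ℝ) : ℝ := if w.2 ≤ α then α * w.1 else w.2

lemma map_zmix (α : ℝ) (h0 : 0 < α) (h1 : α ≤ 1) :
    (I01.prod I01).map (zmix α) = I01 := by
  have hmeas : Measurable (zmix α) := by
    unfold zmix
    refine Measurable.ite (measurableSet_le (by fun_prop) (by fun_prop)) (by fun_prop) (by fun_prop)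
  ext A hA
  rw [Measure.map_apply hmeas hA, Measure.prod_apply_symm (hmeas hA)]
  have e1 : ∀ y : ℝ, I01 ((fun x => (x, y)) ⁻¹' (zmix α ⁻¹' A)) =
      (Set.Iic α).indicator (fun _ => I01 ((fun x => α * x) ⁻¹' A)) y +
      (Set.Ioi α ∩ A).indicator (fun _ => (1 : ENNReal)) y := by
    intro y
    by_cases hy : y ≤ α
    · rw [Set.indicator_of_mem (by exact hy), Set.indicator_of_notMem (by simp [hy])]
      simp only [add_zero]
      congr 1
      ext x
      simp [zmix, hy]
    · rw [Set.indicator_of_notMem (by simpa using hy)]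
      by_cases hyA : y ∈ A
      · rw [Set.indicator_of_mem (show y ∈ Set.Ioi α ∩ A from ⟨by simpa using hy, hyA⟩)]
        have : (fun x : ℝ => (x, y)) ⁻¹' (zmix α ⁻¹' A) = Set.univ := by
          ext x; simp [zmix, hy, hyA]
        rw [this]; simp
      · rw [Set.indicator_of_notMem (by simp [hyA])]
        have : (fun x : ℝ => (x, y)) ⁻¹' (zmix α ⁻¹' A) = ∅ := by
          ext x; simp [zmix, hy, hyA]
        rw [this]; simp
  simp_rw [e1]
  rw [lintegral_add_left (by exact measurable_const.indicator measurableSet_Iic),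
    lintegral_indicator measurableSet_Iic, lintegral_indicator (measurableSet_Ioi.inter hA)]
  simp only [lintegral_const, Measure.restrict_apply_univ, one_mul]
  have hI : I01 (Set.Iic α) = ENNReal.ofReal α := by
    rw [I01, Measure.restrict_apply measurableSet_Iic]
    have : Set.Iic α ∩ Set.Icc 0 1 = Set.Icc 0 α := by
      ext x; simp only [Set.mem_inter_iff, Set.mem_Iic, Set.mem_Icc]
      constructor
      · rintro ⟨a, b, c⟩; exact ⟨b, a⟩
      · rintro ⟨a, b⟩; exact ⟨b, a, b.trans h1⟩
    rw [this]; simp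
  have hS : I01 ((fun x => α * x) ⁻¹' A) = ENNReal.ofReal α⁻¹ * volume (A ∩ Set.Icc 0 α) := by
    rw [I01, Measure.restrict_apply ((measurable_const_mul α) hA)]
    have : (fun x => α * x) ⁻¹' A ∩ Set.Icc 0 1 = (fun x => α * x) ⁻¹' (A ∩ Set.Icc 0 α) := by
      ext x
      simp only [Set.mem_inter_iff, Set.mem_preimage, Set.mem_Icc]
      constructor
      · rintro ⟨a, b, c⟩; exact ⟨a, by positivity, by nlinarith⟩
      · rintro ⟨a, b, c⟩
        exact ⟨a, by by_contra h; push Not at h; nlinarith, by by_contra h; push Not at h; nlinarith⟩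
    rw [this, Real.volume_preimage_mul_left h0.ne', abs_of_pos (inv_pos.2 h0)]
  rw [hI, hS, mul_comm (ENNReal.ofReal α⁻¹), mul_assoc, ← ENNReal.ofReal_mul (by positivity),
    inv_mul_cancel₀ h0.ne', ENNReal.ofReal_one, mul_one, I01,
    Measure.restrict_apply (measurableSet_Ioi.inter hA), Measure.restrict_apply hA]
  rw [← measure_union]
  · congr 1
    ext x
    simp only [Set.mem_union, Set.mem_inter_iff, Set.mem_Icc, Set.mem_Ioi]
    constructor
    · rintro (⟨a, b, c⟩ | ⟨⟨a, b⟩, c, d⟩)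
      · exact ⟨a, b, c.trans h1⟩
      · exact ⟨b, c, d⟩
    · rintro ⟨a, b, c⟩
      rcases le_or_gt x α with h | h
      · exact Or.inl ⟨a, b, h⟩
      · exact Or.inr ⟨⟨h, a⟩, b, c⟩
  · rw [Set.disjoint_left]
    rintro x ⟨_, _, h⟩ ⟨⟨h', _⟩, _⟩
    exact absurd h' (not_lt.2 h)
  · exact (measurableSet_Ioi.inter hA).inter measurableSet_Icc

lemma measurable_zmix' : Measurable (fun p : ℝ × (ℝ × ℝ) => zmix p.1 p.2) := by
  unfold zmix
  exact Measurable.ite (measurableSet_le (by fun_prop) (by fun_prop)) (by fun_prop) (by fun_prop)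

/-- Coupling of two uniform variables `(λX, λY)` such that `A λX = κ + B λY` with high probability. -/
def cpl (A B κ : ℝ) (w : ℝ × ℝ) : ℝ × ℝ :=
  if 0 < A ∧ 0 < B then
    (if B ≤ A then (wrap1 (κ / A + zmix (B / A) w), w.1)
      else (w.1, wrap1 (- κ / B + zmix (A / B) w)))
  else (w.1, w.1)

lemma measurable_cpl : Measurable (fun p : (ℝ × ℝ × ℝ) × (ℝ × ℝ) => cpl p.1.1 p.1.2.1 p.1.2.2 p.2) := by
  unfold cpl
  have hz1 : Measurable (fun p : (ℝ × ℝ × ℝ) × (ℝ × ℝ) => zmix (p.1.2.1 / p.1.1) p.2) :=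
    measurable_zmix'.comp (by fun_prop : Measurable (fun p : (ℝ × ℝ × ℝ) × (ℝ × ℝ) => (p.1.2.1 / p.1.1, p.2)))
  have hz2 : Measurable (fun p : (ℝ × ℝ × ℝ) × (ℝ × ℝ) => zmix (p.1.1 / p.1.2.1) p.2) :=
    measurable_zmix'.comp (by fun_prop : Measurable (fun p : (ℝ × ℝ × ℝ) × (ℝ × ℝ) => (p.1.1 / p.1.2.1, p.2)))
  refine Measurable.ite ?_ (Measurable.ite (measurableSet_le (by fun_prop) (by fun_prop)) ?_ ?_) (by fun_prop)
  · have a1 : MeasurableSet {p : (ℝ × ℝ × ℝ) × (ℝ × ℝ) | 0 < p.1.1} :=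
      measurableSet_lt (by fun_prop) (by fun_prop)
    have a2 : MeasurableSet {p : (ℝ × ℝ × ℝ) × (ℝ × ℝ) | 0 < p.1.2.1} :=
      measurableSet_lt (by fun_prop) (by fun_prop)
    exact a1.inter a2
  · exact (measurable_wrap1.comp (by fun_prop)).prodMk (by fun_prop)
  · exact Measurable.prodMk (by fun_prop) (measurable_wrap1.comp (by fun_prop))

lemma map_fst_unit : (I01.prod I01).map (fun w : ℝ × ℝ => w.1) = I01 := by
  exact (measurePreserving_fst (μ := I01) (ν := I01)).map_eq

lemma map_wz (α β : ℝ) (h0 : 0 < α) (h1 : α ≤ 1) :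
    (I01.prod I01).map (fun w => wrap1 (β + zmix α w)) = I01 := by
  have hz : Measurable (zmix α) := measurable_zmix'.comp (by fun_prop : Measurable (fun w => (α, w)))
  have : (fun w => wrap1 (β + zmix α w)) = (fun z => wrap1 (β + z)) ∘ zmix α := rfl
  have hw : Measurable (fun z => wrap1 (β + z)) := measurable_wrap1.comp (measurable_const_add β)
  rw [this, ← Measure.map_map hw hz, map_zmix α h0 h1, map_wrap1]

lemma map_cpl_fst (A B κ : ℝ) : (I01.prod I01).map (fun w => (cpl A B κ w).1) = I01 := by
  unfold cpl
  split_ifs with h h'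
  · exact map_wz _ _ (div_pos h.2 h.1) ((div_le_one h.1).2 h')
  · exact map_fst_unit
  · exact map_fst_unit

lemma map_cpl_snd (A B κ : ℝ) : (I01.prod I01).map (fun w => (cpl A B κ w).2) = I01 := by
  unfold cpl
  split_ifs with h h'
  · exact map_fst_unit
  · exact map_wz _ _ (div_pos h.1 h.2) ((div_le_one h.2).2 (le_of_not_ge h'))
  · exact map_fst_unit

lemma wz_fail (α β : ℝ) (h0 : 0 < α) (h1 : α ≤ 1) :
    (I01.prod I01) {w | wrap1 (β + zmix α w) ≠ β + α * w.1} ≤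
      ENNReal.ofReal (1 - α) + 2 * ENNReal.ofReal (|β| / α) := by
  have hsub : {w : ℝ × ℝ | wrap1 (β + zmix α w) ≠ β + α * w.1} ⊆
      (Set.univ ×ˢ Set.Ioi α) ∪ ((Set.Iio (|β|/α) ×ˢ Set.univ) ∪ (Set.Ioi (1 - |β|/α) ×ˢ Set.univ)) := by
    intro w hw
    by_contra hcon
    simp only [Set.mem_union, Set.mem_prod, Set.mem_univ, true_and, and_true, Set.mem_Ioi, Set.mem_Iio,
      not_or, not_lt] at hcon
    obtain ⟨c1, c2, c3⟩ := hcon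
    apply hw
    have hz : zmix α w = α * w.1 := by simp [zmix, c1]
    rw [hz, wrap1, if_pos]
    have e1 : |β| ≤ α * w.1 := by
      rw [div_le_iff₀ h0] at c2; linarith
    have e2 : α * w.1 ≤ α - |β| := by
      have := mul_le_mul_of_nonneg_left c3 h0.le
      rw [mul_sub, mul_div_cancel₀ _ h0.ne'] at this
      linarith
    constructor
    · linarith [neg_abs_le β]
    · linarith [le_abs_self β]
  refine (measure_mono hsub).trans ((measure_union_le _ _).trans (add_le_add ?_ ((measure_union_le _ _).trans ?_)))
  · rw [Measure.prod_prod, measure_univ, one_mul, I01, Measure.restrict_apply measurableSet_Ioi]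
    refine (measure_mono (t := Set.Ioc α 1) ?_).trans (by simp)
    rintro x ⟨a, b⟩; exact ⟨a, b.2⟩
  · rw [two_mul]
    refine add_le_add ?_ ?_
    · rw [Measure.prod_prod, measure_univ, mul_one, I01, Measure.restrict_apply measurableSet_Iio]
      refine (measure_mono (t := Set.Ico 0 (|β|/α)) ?_).trans (by simp)
      rintro x ⟨a, b⟩; exact ⟨b.1, a⟩
    · rw [Measure.prod_prod, measure_univ, mul_one, I01, Measure.restrict_apply measurableSet_Ioi]
      refine (measure_mono (t := Set.Ioc (1 - |β|/α) 1) ?_).trans (by simp)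
      rintro x ⟨a, b⟩; exact ⟨a, b.2⟩

lemma cpl_fail (A B κ D r : ℝ) (hr : 0 < r) (hB : r ≤ B) (hAB : |A - B| ≤ D)
    (hκ : |κ| ≤ 2 * D) (hD : 2 * D ≤ r) :
    (I01.prod I01) {w | A * (cpl A B κ w).1 ≠ κ + B * (cpl A B κ w).2} ≤
      ENNReal.ofReal (9 * D / r) := by
  have hB0 : 0 < B := hr.trans_le hB
  have hD0 : 0 ≤ D := (abs_nonneg _).trans hAB
  obtain ⟨k1, k2⟩ := abs_le.1 hAB
  have hA : r / 2 ≤ A := by linarith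
  have hA0 : 0 < A := by linarith
  have key : ∀ u v : ℝ, 0 ≤ v → u ≤ D / r → v ≤ 4 * D / r →
      ENNReal.ofReal u + 2 * ENNReal.ofReal v ≤ ENNReal.ofReal (9 * D / r) := by
    intro u v hv h1 h2
    rcases le_or_gt 0 u with hu | hu
    · rw [show (2 : ENNReal) = ENNReal.ofReal 2 by simp, ← ENNReal.ofReal_mul (by norm_num),
        ← ENNReal.ofReal_add hu (by positivity)]
      apply ENNReal.ofReal_le_ofReal
      have : 9 * D / r = D / r + 2 * (4 * D / r) := by ring
      rw [this]; linarith
    · rw [ENNReal.ofReal_of_nonpos hu.le, zero_add,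
        show (2 : ENNReal) = ENNReal.ofReal 2 by simp, ← ENNReal.ofReal_mul (by norm_num)]
      apply ENNReal.ofReal_le_ofReal
      have : 9 * D / r = D / r + 2 * (4 * D / r) := by ring
      rw [this]; linarith [show 0 ≤ D / r by positivity]
  by_cases h : B ≤ A
  · have hs : {w | A * (cpl A B κ w).1 ≠ κ + B * (cpl A B κ w).2} ⊆
        {w | wrap1 (κ / A + zmix (B / A) w) ≠ κ / A + B / A * w.1} := by
      intro w hw hcon
      apply hw
      simp only [cpl, hA0, hB0, h, and_self, if_true]
      rw [hcon]; field_simp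
    refine (measure_mono hs).trans ((wz_fail _ _ (div_pos hB0 hA0) ((div_le_one hA0).2 h)).trans
      (key _ _ (by positivity) ?_ ?_))
    · rw [one_sub_div hA0.ne', div_le_div_iff₀ hA0 hr]
      nlinarith
    · rw [abs_div, abs_of_pos hA0, div_div_div_cancel_right₀ hA0.ne', div_le_div_iff₀ hB0 hr]
      nlinarith [abs_nonneg κ]
  · have hs : {w | A * (cpl A B κ w).1 ≠ κ + B * (cpl A B κ w).2} ⊆
        {w | wrap1 (-κ / B + zmix (A / B) w) ≠ -κ / B + A / B * w.1} := by
      intro w hw hcon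
      apply hw
      simp only [cpl, hA0, hB0, h, and_self, if_true, if_false]
      rw [hcon]; field_simp; ring
    refine (measure_mono hs).trans ((wz_fail _ _ (div_pos hA0 hB0) ((div_le_one hB0).2 (le_of_not_ge h))).trans
      (key _ _ (by positivity) ?_ ?_))
    · rw [one_sub_div hB0.ne', div_le_div_iff₀ hB0 hr]
      nlinarith
    · rw [abs_div, abs_of_pos hB0, div_div_div_cancel_right₀ hB0.ne', div_le_div_iff₀ hA0 hr, abs_neg]
      nlinarith [abs_nonneg κ]

lemma I01_ae : ∀ᵐ l ∂I01, 0 ≤ l ∧ l ≤ 1 := by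
  have := ae_restrict_mem (μ := (volume : Measure ℝ)) (s := Set.Icc (0:ℝ) 1) measurableSet_Icc
  exact this

def loF (s : ℝ) : ℝ := max 0 (s - 2)
def hiF (s : ℝ) : ℝ := min s 2
def lenF (s : ℝ) : ℝ := hiF s - loF s

lemma loF_add_hiF (s : ℝ) : loF s + hiF s = s := by
  unfold loF hiF
  rcases le_total s 2 with h | h
  · rw [max_eq_left (by linarith), min_eq_left h]; ring
  · rw [max_eq_right (by linarith), min_eq_right h]; ring

lemma loF_lip (s t : ℝ) (h : s ≤ t) : loF s ≤ loF t ∧ loF t - loF s ≤ t - s := by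
  unfold loF
  rcases le_total s 2 with h1 | h1 <;> rcases le_total t 2 with h2 | h2
  · rw [max_eq_left (by linarith), max_eq_left (by linarith)]; constructor <;> linarith
  · rw [max_eq_left (by linarith), max_eq_right (by linarith)]; constructor <;> linarith
  · rw [max_eq_right (by linarith), max_eq_left (by linarith)]; constructor <;> linarith
  · rw [max_eq_right (by linarith), max_eq_right (by linarith)]; constructor <;> linarith

lemma hiF_eq (s : ℝ) : hiF s = s - loF s := by linarith [loF_add_hiF s]

lemma loF_abs (s t : ℝ) : |loF s - loF t| ≤ |s - t| := by
  rcases le_total s t with h | h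
  · have := loF_lip s t h
    rw [abs_of_nonpos (by linarith), abs_of_nonpos (by linarith)]; linarith
  · have := loF_lip t s h
    rw [abs_of_nonneg (by linarith), abs_of_nonneg (by linarith)]; linarith

lemma lenF_abs (s t : ℝ) : |lenF s - lenF t| ≤ |s - t| := by
  unfold lenF
  rw [hiF_eq, hiF_eq]
  rcases le_total s t with h | h
  · have := loF_lip s t h
    rw [abs_of_nonpos (a := s - t) (by linarith), abs_le]; constructor <;> linarith
  · have := loF_lip t s h
    rw [abs_of_nonneg (a := s - t) (by linarith), abs_le]; constructor <;> linarith

lemma lenF_cases (s : ℝ) : lenF s = s ∧ s ≤ 2 ∧ loF s = 0 ∨ lenF s = 4 - s ∧ 2 ≤ s ∧ loF s = s - 2 := by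
  unfold lenF hiF loF
  rcases le_total s 2 with h | h
  · left; rw [max_eq_left (by linarith), min_eq_left h]; exact ⟨by ring, h, rfl⟩
  · right; rw [max_eq_right (by linarith), min_eq_right h]; exact ⟨by ring, h, rfl⟩


lemma stepM_i (x : Fin n × Fin 2 → ℝ) (i j : Fin n) (l : ℝ) :
    stepM n x ((i, j), l) (i, 0) = loF (x (i,0) + x (j,0)) + l * lenF (x (i,0) + x (j,0)) := by
  simp only [stepM, if_true]
  rcases lenF_cases (x (i,0) + x (j,0)) with ⟨h1, h2, h3⟩ | ⟨h1, h2, h3⟩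
  · rw [if_pos (by linarith), h1, h3]; ring
  · rw [h1, h3]
    split_ifs with h
    · have : x (i,0) = 2 - x (j,0) := by linarith
      rw [this]; ring
    · ring

lemma stepM_j (x : Fin n × Fin 2 → ℝ) (i j : Fin n) (hij : i ≠ j) (l : ℝ) :
    stepM n x ((i, j), l) (j, 0) = (x (i,0) + x (j,0)) - stepM n x ((i, j), l) (i, 0) := by
  rw [stepM_i]
  have : ((j, (0 : Fin 2)) : Fin n × Fin 2) ≠ (i, 0) := by
    intro h; exact hij (Prod.ext_iff.1 h).1.symm
  simp only [stepM, if_true, this, if_false]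
  rcases lenF_cases (x (i,0) + x (j,0)) with ⟨h1, h2, h3⟩ | ⟨h1, h2, h3⟩
  · rw [if_pos (by linarith), h1, h3]; ring
  · rw [h1, h3]
    split_ifs with h
    · have : x (i,0) = 2 - x (j,0) := by linarith
      rw [this]; ring
    · ring

lemma stepM_row (x : Fin n × Fin 2 → ℝ) (i j : Fin n) (hij : i ≠ j) (l : ℝ) (hx : ∀ k, x (k,0) + x (k,1) = 2)
    (k : Fin n) : stepM n x ((i, j), l) (k, 0) + stepM n x ((i, j), l) (k, 1) = 2 := by
  simp only [stepM, Prod.mk.injEq, and_true, Fin.zero_eq_one_iff, Nat.succ_ne_self, and_false, if_false,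
    Fin.one_eq_zero_iff]
  by_cases h1 : k = i
  · subst h1
    simp only [if_true]
    split_ifs <;> ring
  · by_cases h2 : k = j
    · subst h2
      simp only [if_true, h1, if_false]
      split_ifs <;> ring
    · simp [h1, h2, hx]

lemma stepM_other (x : Fin n × Fin 2 → ℝ) (i j : Fin n) (l : ℝ) (k : Fin n) (hi : k ≠ i) (hj : k ≠ j) (c : Fin 2) :
    stepM n x ((i, j), l) (k, c) = x (k, c) := by
  simp [stepM, hi, hj]

lemma loF_nonneg (s : ℝ) : 0 ≤ loF s := le_max_left _ _

lemma sum_pair_swap (S : Finset (Fin n)) (f g : Fin n → ℝ) (i j : Fin n) (hij : i ≠ j)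
    (hi : i ∈ S) (hj : j ∈ S) (h : ∀ k, k ≠ i → k ≠ j → f k = g k) :
    ∑ k ∈ S, f k = ∑ k ∈ S, g k + (f i + f j - g i - g j) := by
  rw [← Finset.add_sum_erase S f hi, ← Finset.add_sum_erase S g hi,
    ← Finset.add_sum_erase (S.erase i) f (Finset.mem_erase.2 ⟨hij.symm, hj⟩),
    ← Finset.add_sum_erase (S.erase i) g (Finset.mem_erase.2 ⟨hij.symm, hj⟩)]
  have : ∑ k ∈ (S.erase i).erase j, f k = ∑ k ∈ (S.erase i).erase j, g k := by
    apply Finset.sum_congr rfl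
    intro k hk
    simp only [Finset.mem_erase] at hk
    exact h k hk.2.1 hk.1
  rw [this]; ring

lemma MSet_le2 {x : Fin n × Fin 2 → ℝ} (hx : x ∈ MSet n) (k : Fin n) : 0 ≤ x (k,0) ∧ x (k,0) ≤ 2 := by
  have h1 := hx.1 (k,0)
  have h2 := hx.1 (k,1)
  have h3 := hx.2.1 k
  exact ⟨h1, by linarith⟩

lemma mem_MSet_iff {x : Fin n × Fin 2 → ℝ} : x ∈ MSet n ↔
    (∀ k, 0 ≤ x (k,0) ∧ x (k,0) ≤ 2) ∧ (∀ k, x (k,0) + x (k,1) = 2) ∧ ∑ k, x (k,0) = n := by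
  constructor
  · intro hx
    exact ⟨MSet_le2 hx, hx.2.1, hx.2.2 0⟩
  · rintro ⟨h1, h2, h3⟩
    refine ⟨?_, h2, ?_⟩
    · rintro ⟨k, c⟩
      fin_cases c
      · exact (h1 k).1
      · have := h1 k; have := h2 k; show 0 ≤ x (k,1); linarith
    · intro c
      fin_cases c
      · exact h3
      · show ∑ k, x (k,1) = n
        have : ∀ k, x (k,1) = 2 - x (k,0) := fun k => by linarith [h2 k]
        simp_rw [this]
        rw [Finset.sum_sub_distrib, h3]; simp; ring

lemma stepM_mem {x : Fin n × Fin 2 → ℝ} (hx : x ∈ MSet n) (i j : Fin n) (hij : i ≠ j) (l : ℝ) (h0 : 0 ≤ l) (h1 : l ≤ 1) :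
    stepM n x ((i, j), l) ∈ MSet n := by
  have hx' := mem_MSet_iff.1 hx
  have hi := hx'.1 i
  have hj := hx'.1 j
  rw [mem_MSet_iff]
  refine ⟨?_, stepM_row x i j hij l hx'.2.1, ?_⟩
  · intro k
    by_cases hki : k = i
    · subst hki
      rw [stepM_i]
      rcases lenF_cases (x (k,0) + x (j,0)) with ⟨e1, e2, e3⟩ | ⟨e1, e2, e3⟩ <;> rw [e1, e3] <;> constructor <;> nlinarith
    · by_cases hkj : k = j
      · subst hkj
        rw [stepM_j _ _ _ hij, stepM_i]
        rcases lenF_cases (x (i,0) + x (k,0)) with ⟨e1, e2, e3⟩ | ⟨e1, e2, e3⟩ <;> rw [e1, e3] <;> constructor <;> nlinarith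
      · rw [stepM_other _ _ _ _ _ hki hkj]; exact hx'.1 k
  · rw [sum_pair_swap Finset.univ (fun k => stepM n x ((i, j), l) (k,0)) (fun k => x (k,0)) i j hij
      (Finset.mem_univ _) (Finset.mem_univ _) (fun k hki hkj => stepM_other _ _ _ _ _ hki hkj 0)]
    rw [hx'.2.2, stepM_j _ _ _ hij]; ring

/-- Merge the label classes of `i` and `j`. -/
def mergeL (L : Fin n → Fin n) (e : Fin n × Fin n) : Fin n → Fin n :=
  fun k => if L k = L e.1 then L e.2 else L k

/-- the block with label `b` -/
def blk (L : Fin n → Fin n) (b : Fin n) : Finset (Fin n) := Finset.univ.filter fun k => L k = b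

/-- difference in the first column -/
def dif (z : (Fin n × Fin 2 → ℝ) × (Fin n × Fin 2 → ℝ)) (k : Fin n) : ℝ := z.1 (k,0) - z.2 (k,0)

/-- the invariant kept by the coupling -/
def InvC (L : Fin n → Fin n) (D : ℝ) (z : (Fin n × Fin 2 → ℝ) × (Fin n × Fin 2 → ℝ)) : Prop :=
  (z.1 ∈ MSet n ∧ z.2 ∈ MSet n) ∧ ∀ b, ∑ k ∈ blk L b, dif z k = 0 ∧ ∑ k ∈ blk L b, |dif z k| ≤ D

/-- the required offset at marked times -/
def etaC (L : Fin n → Fin n) (i : Fin n) (z : (Fin n × Fin 2 → ℝ) × (Fin n × Fin 2 → ℝ)) : ℝ :=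
  - ∑ k ∈ (blk L (L i)).erase i, dif z k

/-- the coupled uniform variables -/
def lamC (L : Fin n → Fin n) (e : Fin n × Fin n) (z : (Fin n × Fin 2 → ℝ) × (Fin n × Fin 2 → ℝ))
    (w : ℝ × ℝ) : ℝ × ℝ :=
  if L e.1 = L e.2 then (w.1, w.1)
  else cpl (lenF (z.1 (e.1,0) + z.1 (e.2,0))) (lenF (z.2 (e.1,0) + z.2 (e.2,0)))
    (loF (z.2 (e.1,0) + z.2 (e.2,0)) + etaC L e.1 z - loF (z.1 (e.1,0) + z.1 (e.2,0))) w

/-- the coupled step -/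
def stepC (L : Fin n → Fin n) (e : Fin n × Fin n) (z : (Fin n × Fin 2 → ℝ) × (Fin n × Fin 2 → ℝ))
    (w : ℝ × ℝ) : (Fin n × Fin 2 → ℝ) × (Fin n × Fin 2 → ℝ) :=
  (stepM n z.1 (e, (lamC L e z w).1), stepM n z.2 (e, (lamC L e z w).2))

lemma mergeL_same (L : Fin n → Fin n) (i j : Fin n) (h : L i = L j) : mergeL L (i, j) = L := by
  funext k
  simp only [mergeL]
  split_ifs with h'
  · rw [h', h]
  · rfl

lemma inv_unmarked (L : Fin n → Fin n) (i j : Fin n) (hij : i ≠ j) (h : L i = L j) (D : ℝ)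
    (z : (Fin n × Fin 2 → ℝ) × (Fin n × Fin 2 → ℝ)) (hz : InvC L D z) (l : ℝ) (h0 : 0 ≤ l) (h1 : l ≤ 1) :
    InvC L D (stepM n z.1 ((i,j), l), stepM n z.2 ((i,j), l)) := by
  refine ⟨⟨stepM_mem hz.1.1 i j hij l h0 h1, stepM_mem hz.1.2 i j hij l h0 h1⟩, ?_⟩
  intro b
  set z' := (stepM n z.1 ((i,j), l), stepM n z.2 ((i,j), l)) with hz'
  have hoth : ∀ k, k ≠ i → k ≠ j → dif z' k = dif z k := by
    intro k hki hkj
    simp only [dif, hz', stepM_other _ _ _ _ _ hki hkj]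
  have hsum : dif z' i + dif z' j = dif z i + dif z j := by
    simp only [dif, hz']
    rw [stepM_j _ _ _ hij, stepM_j _ _ _ hij]; ring
  have habs : |dif z' i| + |dif z' j| ≤ |dif z i| + |dif z j| := by
    have e1 : dif z' i = (1 - l) * (loF (z.1 (i,0) + z.1 (j,0)) - loF (z.2 (i,0) + z.2 (j,0))) +
        l * (hiF (z.1 (i,0) + z.1 (j,0)) - hiF (z.2 (i,0) + z.2 (j,0))) := by
      simp only [dif, hz', stepM_i, lenF]; ring
    have e2 : dif z' j = l * (loF (z.1 (i,0) + z.1 (j,0)) - loF (z.2 (i,0) + z.2 (j,0))) +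
        (1 - l) * (hiF (z.1 (i,0) + z.1 (j,0)) - hiF (z.2 (i,0) + z.2 (j,0))) := by
      have : dif z' j = (z.1 (i,0) + z.1 (j,0)) - (z.2 (i,0) + z.2 (j,0)) - dif z' i := by
        have := hsum; simp only [dif] at this ⊢; linarith
      rw [this, e1, hiF_eq, hiF_eq]; ring
    have key : |dif z' i| + |dif z' j| ≤ |(dif z i + dif z j)| := by
      have hs : dif z i + dif z j = (z.1 (i,0) + z.1 (j,0)) - (z.2 (i,0) + z.2 (j,0)) := by
        simp only [dif]; ring
      rw [e1, e2, hs]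
      generalize z.1 (i,0) + z.1 (j,0) = s
      generalize z.2 (i,0) + z.2 (j,0) = t
      rw [hiF_eq, hiF_eq]
      rcases le_total s t with hst | hst
      · have := loF_lip s t hst
        have a1 : loF s - loF t ≤ 0 := by linarith
        have a2 : s - loF s - (t - loF t) ≤ 0 := by linarith
        rw [abs_of_nonpos (a := s - t) (by linarith), abs_of_nonpos, abs_of_nonpos]
        · apply le_of_eq; ring
        · nlinarith
        · nlinarith
      · have := loF_lip t s hst
        have a1 : 0 ≤ loF s - loF t := by linarith
        have a2 : 0 ≤ s - loF s - (t - loF t) := by linarith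
        have a3 : 0 ≤ 1 - l := by linarith
        rw [abs_of_nonneg (a := s - t) (by linarith), abs_of_nonneg, abs_of_nonneg]
        · apply le_of_eq; ring
        · positivity
        · positivity
    exact key.trans (abs_add_le _ _)
  by_cases hb : L i = b
  · have mi : i ∈ blk L b := by simp [blk, hb]
    have mj : j ∈ blk L b := by simp [blk, ← h, hb]
    rw [sum_pair_swap _ (dif z') (dif z) i j hij mi mj hoth,
      sum_pair_swap _ (fun k => |dif z' k|) (fun k => |dif z k|) i j hij mi mj
        (fun k a b => by simp only [hoth k a b])]
    refine ⟨by linarith [(hz.2 b).1], by linarith [(hz.2 b).2]⟩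
  · have : ∀ k ∈ blk L b, dif z' k = dif z k := by
      intro k hk
      simp only [blk, Finset.mem_filter, Finset.mem_univ, true_and] at hk
      apply hoth
      · rintro rfl; exact hb hk
      · rintro rfl; rw [← h] at hk; exact hb hk
    rw [Finset.sum_congr rfl this, Finset.sum_congr rfl (fun k hk => congrArg abs (this k hk))]
    exact hz.2 b

lemma blk_merge (L : Fin n → Fin n) (i j : Fin n) (h : L i ≠ L j) :
    blk (mergeL L (i,j)) (L j) = blk L (L i) ∪ blk L (L j) := by
  ext k
  simp only [blk, mergeL, Finset.mem_filter, Finset.mem_univ, true_and, Finset.mem_union]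
  split_ifs with h'
  · simp [h']
  · simp [h']

lemma blk_disj (L : Fin n → Fin n) (i j : Fin n) (h : L i ≠ L j) :
    Disjoint (blk L (L i)) (blk L (L j)) := by
  rw [Finset.disjoint_left]
  intro k hk hk'
  simp only [blk, Finset.mem_filter, Finset.mem_univ, true_and] at hk hk'
  exact h (hk.symm.trans hk')

lemma blk_merge_other (L : Fin n → Fin n) (i j b : Fin n) (hi : b ≠ L i) (hj : b ≠ L j) :
    blk (mergeL L (i,j)) b = blk L b := by
  ext k
  simp only [blk, mergeL, Finset.mem_filter, Finset.mem_univ, true_and]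
  split_ifs with h'
  · simp [h', hi.symm, hj.symm]
  · rfl

lemma sum_blk_split (L : Fin n → Fin n) (i j : Fin n) (h : L i ≠ L j) (f : Fin n → ℝ) :
    ∑ k ∈ blk (mergeL L (i,j)) (L j), f k =
      f i + ∑ k ∈ (blk L (L i)).erase i, f k + (f j + ∑ k ∈ (blk L (L j)).erase j, f k) := by
  rw [blk_merge L i j h, Finset.sum_union (blk_disj L i j h),
    Finset.add_sum_erase _ f (by simp [blk]), Finset.add_sum_erase _ f (by simp [blk])]

lemma inv_bounds (L : Fin n → Fin n) (i j : Fin n) (h : L i ≠ L j) (D : ℝ)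
    (z : (Fin n × Fin 2 → ℝ) × (Fin n × Fin 2 → ℝ)) (hz : InvC (mergeL L (i,j)) D z) :
    |etaC L i z| ≤ D ∧ |(z.1 (i,0) + z.1 (j,0)) - (z.2 (i,0) + z.2 (j,0))| ≤ D := by
  have h2 := (hz.2 (L j)).2
  rw [sum_blk_split L i j h] at h2
  have a1 : |∑ k ∈ (blk L (L i)).erase i, dif z k| ≤ ∑ k ∈ (blk L (L i)).erase i, |dif z k| :=
    Finset.abs_sum_le_sum_abs _ _
  have a2 : 0 ≤ ∑ k ∈ (blk L (L j)).erase j, |dif z k| := Finset.sum_nonneg fun _ _ => abs_nonneg _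
  have a3 := abs_nonneg (dif z i)
  have a4 := abs_nonneg (dif z j)
  have a5 : 0 ≤ ∑ k ∈ (blk L (L i)).erase i, |dif z k| := Finset.sum_nonneg fun _ _ => abs_nonneg _
  constructor
  · rw [etaC, abs_neg]; linarith
  · have : (z.1 (i,0) + z.1 (j,0)) - (z.2 (i,0) + z.2 (j,0)) = dif z i + dif z j := by simp only [dif]; ring
    rw [this]
    linarith [abs_add_le (dif z i) (dif z j)]

lemma inv_marked (L : Fin n → Fin n) (i j : Fin n) (h : L i ≠ L j) (D : ℝ)
    (z : (Fin n × Fin 2 → ℝ) × (Fin n × Fin 2 → ℝ)) (hz : InvC (mergeL L (i,j)) D z) (l l' : ℝ)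
    (h0 : 0 ≤ l) (h1 : l ≤ 1) (h0' : 0 ≤ l') (h1' : l' ≤ 1)
    (hs : lenF (z.1 (i,0) + z.1 (j,0)) * l = (loF (z.2 (i,0) + z.2 (j,0)) + etaC L i z
      - loF (z.1 (i,0) + z.1 (j,0))) + lenF (z.2 (i,0) + z.2 (j,0)) * l') :
    InvC L D (stepM n z.1 ((i,j), l), stepM n z.2 ((i,j), l')) := by
  have hij : i ≠ j := fun hh => h (by rw [hh])
  refine ⟨⟨stepM_mem hz.1.1 i j hij l h0 h1, stepM_mem hz.1.2 i j hij l' h0' h1'⟩, ?_⟩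
  set z' := (stepM n z.1 ((i,j), l), stepM n z.2 ((i,j), l')) with hz'
  have hoth : ∀ k, k ≠ i → k ≠ j → dif z' k = dif z k := by
    intro k hki hkj
    simp only [dif, hz', stepM_other _ _ _ _ _ hki hkj]
  have hdi : dif z' i = - ∑ k ∈ (blk L (L i)).erase i, dif z k := by
    have : dif z' i = etaC L i z := by
      simp only [dif, hz', stepM_i]; linarith
    rw [this, etaC]
  have hsum0 := (hz.2 (L j)).1
  have habs0 := (hz.2 (L j)).2
  rw [sum_blk_split L i j h] at hsum0 habs0
  have hdj : dif z' j = - ∑ k ∈ (blk L (L j)).erase j, dif z k := by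
    have : dif z' i + dif z' j = dif z i + dif z j := by
      simp only [dif, hz']
      rw [stepM_j _ _ _ hij, stepM_j _ _ _ hij]; ring
    linarith
  have hA : ∀ k ∈ (blk L (L i)).erase i, dif z' k = dif z k := by
    intro k hk
    simp only [blk, Finset.mem_erase, Finset.mem_filter, Finset.mem_univ, true_and] at hk
    exact hoth k hk.1 (by rintro rfl; exact h hk.2.symm)
  have hB : ∀ k ∈ (blk L (L j)).erase j, dif z' k = dif z k := by
    intro k hk
    simp only [blk, Finset.mem_erase, Finset.mem_filter, Finset.mem_univ, true_and] at hk
    exact hoth k (by rintro rfl; exact h hk.2) hk.1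
  have a1 : |∑ k ∈ (blk L (L i)).erase i, dif z k| ≤ ∑ k ∈ (blk L (L i)).erase i, |dif z k| :=
    Finset.abs_sum_le_sum_abs _ _
  have a2 : |∑ k ∈ (blk L (L j)).erase j, dif z k| ≤ ∑ k ∈ (blk L (L j)).erase j, |dif z k| :=
    Finset.abs_sum_le_sum_abs _ _
  intro b
  by_cases hbi : b = L i
  · subst hbi
    rw [← Finset.add_sum_erase (blk L (L i)) (dif z') (a := i) (by simp [blk]),
      ← Finset.add_sum_erase (blk L (L i)) (fun k => |dif z' k|) (a := i) (by simp [blk]),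
      Finset.sum_congr rfl hA, Finset.sum_congr rfl (fun k hk => congrArg abs (hA k hk)), hdi]
    refine ⟨by ring, ?_⟩
    have : |-∑ k ∈ (blk L (L i)).erase i, dif z k| ≤ |dif z i| + |dif z j| + ∑ k ∈ (blk L (L j)).erase j, |dif z k| := by
      have e : -∑ k ∈ (blk L (L i)).erase i, dif z k = dif z i + dif z j + ∑ k ∈ (blk L (L j)).erase j, dif z k := by
        linarith
      rw [e]
      linarith [abs_add_le (dif z i + dif z j) (∑ k ∈ (blk L (L j)).erase j, dif z k), abs_add_le (dif z i) (dif z j)]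
    linarith
  · by_cases hbj : b = L j
    · subst hbj
      rw [← Finset.add_sum_erase (blk L (L j)) (dif z') (a := j) (by simp [blk]),
        ← Finset.add_sum_erase (blk L (L j)) (fun k => |dif z' k|) (a := j) (by simp [blk]),
        Finset.sum_congr rfl hB, Finset.sum_congr rfl (fun k hk => congrArg abs (hB k hk)), hdj]
      refine ⟨by ring, ?_⟩
      have : |-∑ k ∈ (blk L (L j)).erase j, dif z k| ≤ |dif z i| + |dif z j| + ∑ k ∈ (blk L (L i)).erase i, |dif z k| := by
        have e : -∑ k ∈ (blk L (L j)).erase j, dif z k = dif z i + dif z j + ∑ k ∈ (blk L (L i)).erase i, dif z k := by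
          linarith
        rw [e]
        linarith [abs_add_le (dif z i + dif z j) (∑ k ∈ (blk L (L i)).erase i, dif z k), abs_add_le (dif z i) (dif z j)]
      linarith
    · have : ∀ k ∈ blk L b, dif z' k = dif z k := by
        intro k hk
        simp only [blk, Finset.mem_filter, Finset.mem_univ, true_and] at hk
        apply hoth
        · rintro rfl; exact hbi hk.symm
        · rintro rfl; exact hbj hk.symm
      rw [Finset.sum_congr rfl this, Finset.sum_congr rfl (fun k hk => congrArg abs (this k hk))]
      have := hz.2 b
      rwa [blk_merge_other L i j b hbi hbj] at this

/-- start of the coupling: one block -/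
lemma inv_start (L : Fin n → Fin n) (D : ℝ) (hL : ∀ k k', L k = L k')
    (z : (Fin n × Fin 2 → ℝ) × (Fin n × Fin 2 → ℝ)) (hz : z.1 ∈ MSet n ∧ z.2 ∈ MSet n)
    (hD : ∑ q : Fin n × Fin 2, |z.1 q - z.2 q| ≤ D) : InvC L D z := by
  have h1 : ∑ k, |dif z k| ≤ D := by
    refine le_trans ?_ hD
    rw [Fintype.sum_prod_type]
    apply Finset.sum_le_sum
    intro k _
    rw [Fin.sum_univ_two]
    simp only [dif]
    linarith [abs_nonneg (z.1 (k,1) - z.2 (k,1))]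
  have h2 : ∑ k, dif z k = 0 := by
    simp only [dif]
    rw [Finset.sum_sub_distrib, hz.1.2.2 0, hz.2.2.2 0, sub_self]
  refine ⟨hz, fun b => ?_⟩
  by_cases hb : ∃ k, L k = b
  · obtain ⟨k0, hk0⟩ := hb
    have : blk L b = Finset.univ := by
      ext k; simp [blk, ← hk0, hL k k0]
    rw [this]; exact ⟨h2, h1⟩
  · have : blk L b = ∅ := by
      ext k; simp only [blk, Finset.mem_filter, Finset.mem_univ, true_and, Finset.notMem_empty, iff_false]
      exact fun h => hb ⟨k, h⟩
    rw [this]; simp only [Finset.sum_empty, true_and]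
    exact le_trans (Finset.sum_nonneg fun _ _ => abs_nonneg _) h1

lemma inv_end (D : ℝ) (z : (Fin n × Fin 2 → ℝ) × (Fin n × Fin 2 → ℝ)) (hz : InvC id D z) : z.1 = z.2 := by
  have h : ∀ k, z.1 (k,0) = z.2 (k,0) := by
    intro k
    have := (hz.2 k).1
    have hb : blk id k = {k} := by ext k'; simp [blk]
    rw [hb, Finset.sum_singleton, dif] at this
    linarith
  funext ⟨k, c⟩
  fin_cases c
  · exact h k
  · have h1 := hz.1.1.2.1 k
    have h2 := hz.1.2.2.1 k
    have := h k
    show z.1 (k,1) = z.2 (k,1)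
    linarith

lemma measurable_stepM (e : Fin n × Fin n) :
    Measurable (fun p : (Fin n × Fin 2 → ℝ) × ℝ => stepM n p.1 (e, p.2)) := by
  rw [measurable_pi_iff]
  intro q
  have hd : Measurable (fun p : (Fin n × Fin 2 → ℝ) × ℝ => 2 - p.1 (e.1, 0) - p.1 (e.2, 0)) := by fun_prop
  have hS : MeasurableSet {p : (Fin n × Fin 2 → ℝ) × ℝ | 0 ≤ 2 - p.1 (e.1, 0) - p.1 (e.2, 0)} :=
    measurableSet_le measurable_const hd
  simp only [stepM]
  split_ifs
  · exact Measurable.ite hS (by fun_prop) (by fun_prop)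
  · exact Measurable.ite hS (by fun_prop) (by fun_prop)
  · exact Measurable.ite hS (by fun_prop) (by fun_prop)
  · exact Measurable.ite hS (by fun_prop) (by fun_prop)
  · fun_prop

lemma measurableSet_MSet : MeasurableSet (MSet n) := by
  have h : MSet n = (⋂ p, {x : Fin n × Fin 2 → ℝ | 0 ≤ x p}) ∩ ((⋂ i : Fin n, {x : Fin n × Fin 2 → ℝ | x (i, 0) + x (i, 1) = 2}) ∩
      ⋂ j : Fin 2, {x : Fin n × Fin 2 → ℝ | ∑ i : Fin n, x (i, j) = n}) := by
    ext x; simp [MSet]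
  rw [h]
  refine (MeasurableSet.iInter fun p => ?_).inter ((MeasurableSet.iInter fun p => ?_).inter (MeasurableSet.iInter fun p => ?_))
  · exact measurableSet_le measurable_const (by fun_prop)
  · exact measurableSet_eq_fun (by fun_prop) (by fun_prop)
  · exact measurableSet_eq_fun (by fun_prop) (by fun_prop)

/-- the direction of the move on rows `i`, `j` -/
def vdir (i j : Fin n) : Fin n × Fin 2 → ℝ := fun p =>
  ((if p.1 = i then 1 else 0) - (if p.1 = j then 1 else 0)) * (if p.2 = 0 then 1 else -1)

def sF (i j : Fin n) (y : Fin n × Fin 2 → ℝ) : ℝ := y (i,0) + y (j,0)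

lemma sF_add (i j : Fin n) (hij : i ≠ j) (y : Fin n × Fin 2 → ℝ) (t : ℝ) :
    sF i j (y + t • vdir i j) = sF i j y := by
  simp [sF, vdir, hij, hij.symm]; ring

lemma add_mem_iff (i j : Fin n) (hij : i ≠ j) (y : Fin n × Fin 2 → ℝ) (hy : y ∈ MSet n) (t : ℝ) :
    y + t • vdir i j ∈ MSet n ↔ loF (sF i j y) ≤ y (i,0) + t ∧ y (i,0) + t ≤ hiF (sF i j y) := by
  have hy' := mem_MSet_iff.1 hy
  have hi : (y + t • vdir i j) (i,0) = y (i,0) + t := by simp [vdir, hij]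
  have hj : (y + t • vdir i j) (j,0) = y (j,0) - t := by simp [vdir, hij.symm]; ring
  have ho : ∀ k, k ≠ i → k ≠ j → (y + t • vdir i j) (k,0) = y (k,0) := by
    intro k h1 h2; simp [vdir, h1, h2]
  rw [mem_MSet_iff]
  constructor
  · rintro ⟨h, -, -⟩
    have h1 := h i
    have h2 := h j
    rw [hi] at h1; rw [hj] at h2
    simp only [loF, hiF, sF]
    refine ⟨max_le h1.1 (by linarith), le_min (by linarith) h1.2⟩
  · rintro ⟨h1, h2⟩
    simp only [loF, hiF, sF, max_le_iff, le_min_iff] at h1 h2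
    refine ⟨?_, ?_, ?_⟩
    · intro k
      by_cases hk : k = i
      · subst hk; rw [hi]; exact ⟨h1.1, h2.2⟩
      · by_cases hk' : k = j
        · subst hk'; rw [hj]; constructor <;> linarith
        · rw [ho k hk hk']; exact hy'.1 k
    · intro k
      have := hy'.2.1 k
      simp only [vdir, Pi.add_apply, Pi.smul_apply, smul_eq_mul, if_true, one_ne_zero, if_false]
      linarith
    · rw [sum_pair_swap Finset.univ (fun k => (y + t • vdir i j) (k,0)) (fun k => y (k,0)) i j hij
        (Finset.mem_univ _) (Finset.mem_univ _) ho, hi, hj, hy'.2.2]; ring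

lemma stepM_eq_add (i j : Fin n) (hij : i ≠ j) (y : Fin n × Fin 2 → ℝ) (hy : y ∈ MSet n) (l : ℝ) :
    stepM n y ((i,j), l) = y + (loF (sF i j y) + l * lenF (sF i j y) - y (i,0)) • vdir i j := by
  have h0 : ∀ k, stepM n y ((i,j), l) (k,0) = (y + (loF (sF i j y) + l * lenF (sF i j y) - y (i,0)) • vdir i j) (k,0) := by
    intro k
    by_cases hk : k = i
    · subst hk; rw [stepM_i]; simp [vdir, hij, sF]
    · by_cases hk' : k = j
      · subst hk'; rw [stepM_j _ _ _ hij, stepM_i]; simp [vdir, hk, sF]; ring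
      · rw [stepM_other _ _ _ _ _ hk hk']; simp [vdir, hk, hk']
  have hr := stepM_row y i j hij l (mem_MSet_iff.1 hy).2.1
  funext ⟨k, c⟩
  fin_cases c
  · exact h0 k
  · have h1 := hr k
    have h2 := h0 k
    have h3 := (mem_MSet_iff.1 hy).2.1 k
    show stepM n y ((i,j), l) (k,1) = (y + (loF (sF i j y) + l * lenF (sF i j y) - y (i,0)) • vdir i j) (k,1)
    have h4 : stepM n y ((i,j), l) (k,1) = 2 - stepM n y ((i,j), l) (k,0) := by linarith
    rw [h4, h2]
    simp only [vdir, Pi.add_apply, Pi.smul_apply, smul_eq_mul, if_true, one_ne_zero, if_false]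
    linarith

lemma lenF_pos_mem (i j : Fin n) (y : Fin n × Fin 2 → ℝ) (hy : y ∈ MSet n) :
    loF (sF i j y) ≤ y (i,0) ∧ y (i,0) ≤ hiF (sF i j y) := by
  have h1 := MSet_le2 hy i
  have h2 := MSet_le2 hy j
  simp only [loF, hiF, sF]
  exact ⟨max_le h1.1 (by linarith), le_min (by linarith) h1.2⟩

lemma vol_line (i j : Fin n) (hij : i ≠ j) (y : Fin n × Fin 2 → ℝ) (hy : y ∈ MSet n) :
    volume {t : ℝ | y + (-t) • vdir i j ∈ MSet n} = ENNReal.ofReal (lenF (sF i j y)) := by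
  have : {t : ℝ | y + (-t) • vdir i j ∈ MSet n} = Set.Icc (y (i,0) - hiF (sF i j y)) (y (i,0) - loF (sF i j y)) := by
    ext t
    rw [Set.mem_ofPred_eq, add_mem_iff i j hij y hy, Set.mem_Icc]
    constructor <;> rintro ⟨h1, h2⟩ <;> constructor <;> linarith
  rw [this, Real.volume_Icc]
  congr 1; unfold lenF; ring

lemma I01_step (i j : Fin n) (hij : i ≠ j) (y : Fin n × Fin 2 → ℝ) (hy : y ∈ MSet n) (hl : 0 < lenF (sF i j y))
    (S : Set (Fin n × Fin 2 → ℝ)) (hS : MeasurableSet S) :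
    I01 {l | stepM n y ((i,j), l) ∈ S} = (ENNReal.ofReal (lenF (sF i j y)))⁻¹ *
      volume {t : ℝ | y + t • vdir i j ∈ S ∩ MSet n} := by
  have hm : MeasurableSet {l | stepM n y ((i,j), l) ∈ S} := by
    have : Measurable (fun l => stepM n y ((i,j), l)) := (measurable_stepM (i,j)).comp (measurable_const.prodMk measurable_id)
    exact this hS
  rw [I01, Measure.restrict_apply hm]
  have e : {l | stepM n y ((i,j), l) ∈ S} ∩ Set.Icc 0 1 =
      (fun l => l * lenF (sF i j y)) ⁻¹' ((fun t => t + (loF (sF i j y) - y (i,0))) ⁻¹' {t : ℝ | y + t • vdir i j ∈ S ∩ MSet n}) := by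
    ext l
    simp only [Set.mem_inter_iff, Set.mem_ofPred_eq, Set.mem_preimage, Set.mem_Icc]
    rw [stepM_eq_add i j hij y hy, add_mem_iff i j hij y hy]
    have e1 : l * lenF (sF i j y) + (loF (sF i j y) - y (i,0)) = loF (sF i j y) + l * lenF (sF i j y) - y (i,0) := by ring
    rw [e1]
    apply and_congr Iff.rfl
    have hh : hiF (sF i j y) = loF (sF i j y) + lenF (sF i j y) := by unfold lenF; ring
    rw [hh]
    constructor
    · rintro ⟨h1, h2⟩; constructor <;> nlinarith
    · rintro ⟨h1, h2⟩
      constructor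
      · by_contra h; push Not at h; nlinarith
      · by_contra h; push Not at h; nlinarith
  rw [e, Real.volume_preimage_mul_right hl.ne', measure_preimage_add_right, abs_of_pos (inv_pos.2 hl),
    ENNReal.ofReal_inv_of_pos hl]

def psiF (i j : Fin n) (y : Fin n × Fin 2 → ℝ) : ENNReal :=
  if 0 < lenF (sF i j y) then (ENNReal.ofReal (lenF (sF i j y)))⁻¹ else 0

lemma measurable_loF : Measurable loF := by unfold loF; fun_prop
lemma measurable_lenF : Measurable lenF := by unfold lenF hiF loF; fun_prop
lemma measurable_sF (i j : Fin n) : Measurable (sF i j) := by unfold sF; fun_prop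

lemma measurable_psiF (i j : Fin n) : Measurable (psiF i j) := by
  unfold psiF
  have h := measurable_lenF.comp (measurable_sF i j)
  exact Measurable.ite (measurableSet_lt measurable_const h) h.ennreal_ofReal.inv measurable_const

lemma stat_B (d : ℝ) (i j : Fin n) (hij : i ≠ j) (hfin : (μH[d] : Measure (Fin n × Fin 2 → ℝ)) (MSet n) ≠ ⊤)
    (S : Set (Fin n × Fin 2 → ℝ)) (hS : MeasurableSet S) :
    ∫⁻ y in MSet n, psiF i j y * volume {t : ℝ | y + t • vdir i j ∈ S ∩ MSet n} ∂μH[d] =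
    ∫⁻ y in MSet n, (ENNReal.ofReal (lenF (sF i j y)) * psiF i j y) * S.indicator 1 y ∂μH[d] := by
  set μ := (μH[d] : Measure (Fin n × Fin 2 → ℝ)) with hμ
  have : IsFiniteMeasure (μ.restrict (MSet n)) := ⟨by rw [Measure.restrict_apply_univ]; exact lt_top_iff_ne_top.2 hfin⟩
  have hM := measurableSet_MSet (n := n)
  have hψ := measurable_psiF i j
  have hSM : Measurable (Set.indicator (S ∩ MSet n) (1 : (Fin n × Fin 2 → ℝ) → ENNReal)) :=
    measurable_one.indicator (hS.inter hM)
  have hS1 : Measurable (Set.indicator S (1 : (Fin n × Fin 2 → ℝ) → ENNReal)) :=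
    measurable_one.indicator hS
  have hM1 : Measurable (Set.indicator (MSet n) (1 : (Fin n × Fin 2 → ℝ) → ENNReal)) :=
    measurable_one.indicator hM
  have hline : ∀ y : Fin n × Fin 2 → ℝ, Measurable (fun t : ℝ => y + t • vdir i j) := by
    intro y; fun_prop
  have hline' : ∀ y : Fin n × Fin 2 → ℝ, Measurable (fun t : ℝ => y + (-t) • vdir i j) := by
    intro y; fun_prop
  have hadd : Measurable (fun p : (Fin n × Fin 2 → ℝ) × ℝ => p.1 + p.2 • vdir i j) := by fun_prop
  have hadd' : Measurable (fun p : (Fin n × Fin 2 → ℝ) × ℝ => p.1 + (-p.2) • vdir i j) := by fun_prop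
  have e1 : ∀ y, psiF i j y * volume {t : ℝ | y + t • vdir i j ∈ S ∩ MSet n} =
      ∫⁻ t : ℝ, psiF i j y * Set.indicator (S ∩ MSet n) 1 (y + t • vdir i j) := by
    intro y
    refine Eq.trans ?_ (lintegral_const_mul _ (hSM.comp (hline y))).symm
    congr 1
    exact (lintegral_indicator_one ((hline y) (hS.inter hM))).symm
  simp_rw [e1]
  rw [lintegral_lintegral_swap]
  swap
  · exact ((hψ.comp measurable_fst).mul (hSM.comp hadd)).aemeasurable
  have e2 : ∀ t : ℝ, ∫⁻ y in MSet n, psiF i j y * Set.indicator (S ∩ MSet n) 1 (y + t • vdir i j) ∂μ =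
      ∫⁻ y in MSet n, Set.indicator (MSet n) 1 (y + (-t) • vdir i j) * (psiF i j y * S.indicator 1 y) ∂μ := by
    intro t
    rw [← lintegral_indicator hM, ← lintegral_indicator hM]
    refine Eq.trans ?_ (lintegral_add_right_eq_self (μ := μ) _ (t • vdir i j))
    apply lintegral_congr
    intro y
    have hs : psiF i j (y + t • vdir i j) = psiF i j y := by
      unfold psiF; rw [sF_add i j hij]
    have hc : y + t • vdir i j + (-t) • vdir i j = y := by
      rw [neg_smul, add_neg_cancel_right]
    by_cases h1 : y ∈ MSet n
    · by_cases h2 : y + t • vdir i j ∈ MSet n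
      · rw [Set.indicator_of_mem h1, Set.indicator_of_mem h2, hc, hs, Set.indicator_of_mem h1]
        by_cases h3 : y + t • vdir i j ∈ S
        · rw [Set.indicator_of_mem h3, Set.indicator_of_mem (show y + t • vdir i j ∈ S ∩ MSet n from ⟨h3, h2⟩)]; simp
        · rw [Set.indicator_of_notMem h3, Set.indicator_of_notMem (fun h => h3 h.1)]; simp
      · rw [Set.indicator_of_mem h1, Set.indicator_of_notMem h2, Set.indicator_of_notMem (fun h => h2 h.2)]; simp
    · rw [Set.indicator_of_notMem h1]
      by_cases h2 : y + t • vdir i j ∈ MSet n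
      · rw [Set.indicator_of_mem h2, hc, Set.indicator_of_notMem h1, zero_mul]
      · rw [Set.indicator_of_notMem h2]
  simp_rw [e2]
  rw [lintegral_lintegral_swap]
  swap
  · exact ((hM1.comp (hadd'.comp measurable_swap)).mul ((hψ.mul hS1).comp measurable_snd)).aemeasurable
  apply setLIntegral_congr_fun hM
  intro y hy
  show ∫⁻ t : ℝ, (MSet n).indicator 1 (y + (-t) • vdir i j) * (psiF i j y * S.indicator 1 y) = _
  refine (lintegral_mul_const _ (hM1.comp (hline' y))).trans ?_
  rw [← mul_assoc]
  congr 2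
  rw [← vol_line i j hij y hy]
  exact lintegral_indicator_one ((hline' y) hM)

lemma stat_core (d : ℝ) (i j : Fin n) (hij : i ≠ j) (hfin : (μH[d] : Measure (Fin n × Fin 2 → ℝ)) (MSet n) ≠ ⊤)
    (S : Set (Fin n × Fin 2 → ℝ)) (hS : MeasurableSet S) :
    ∫⁻ y in MSet n, I01 {l | stepM n y ((i,j), l) ∈ S} ∂μH[d] = (μH[d]).restrict (MSet n) S := by
  set μ := (μH[d] : Measure (Fin n × Fin 2 → ℝ)) with hμ
  have hM := measurableSet_MSet (n := n)
  have hS1 : Measurable (Set.indicator S (1 : (Fin n × Fin 2 → ℝ) → ENNReal)) :=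
    measurable_one.indicator hS
  have hlm := measurable_lenF.comp (measurable_sF i j)
  have hlen : ∀ y ∈ MSet n, 0 ≤ lenF (sF i j y) := by
    intro y hy
    have := lenF_pos_mem i j y hy
    unfold lenF; linarith
  let g : (Fin n × Fin 2 → ℝ) → ENNReal := fun y => if 0 < lenF (sF i j y) then 0 else S.indicator 1 y
  have hg : Measurable g := Measurable.ite (measurableSet_lt measurable_const hlm) measurable_const hS1
  have e1 : ∫⁻ y in MSet n, I01 {l | stepM n y ((i,j), l) ∈ S} ∂μ =
      ∫⁻ y in MSet n, (g y + psiF i j y * volume {t : ℝ | y + t • vdir i j ∈ S ∩ MSet n}) ∂μ := by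
    apply setLIntegral_congr_fun hM
    intro y hy
    show I01 {l | stepM n y ((i,j), l) ∈ S} = g y + psiF i j y * volume {t : ℝ | y + t • vdir i j ∈ S ∩ MSet n}
    by_cases h : 0 < lenF (sF i j y)
    · simp only [g, psiF, if_pos h]
      rw [I01_step i j hij y hy h S hS, zero_add]
    · simp only [g, psiF, if_neg h]
      have h0 : lenF (sF i j y) = 0 := le_antisymm (not_lt.1 h) (hlen y hy)
      have hlo : loF (sF i j y) = y (i,0) := by
        have := lenF_pos_mem i j y hy
        unfold lenF at h0; linarith
      have : ∀ l, stepM n y ((i,j), l) = y := by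
        intro l
        rw [stepM_eq_add i j hij y hy, h0, hlo]; simp
      simp_rw [this]
      by_cases hyS : y ∈ S <;> simp [hyS]
  rw [e1, lintegral_add_left hg, stat_B d i j hij hfin S hS, ← lintegral_add_left hg,
    ← lintegral_indicator_one hS]
  apply setLIntegral_congr_fun hM
  intro y hy
  show g y + _ = S.indicator 1 y
  by_cases h : 0 < lenF (sF i j y)
  · simp only [g, psiF, if_pos h]
    rw [ENNReal.mul_inv_cancel (by simpa using h) ENNReal.ofReal_ne_top, one_mul, zero_add]
  · simp only [g, psiF, if_neg h]
    rw [mul_zero, zero_mul, add_zero]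

lemma UM_aux (h : UM n Set.univ = 1) : (μH[(n:ℝ)-1] : Measure (Fin n × Fin 2 → ℝ)) (MSet n) ≠ 0 ∧
    (μH[(n:ℝ)-1] : Measure (Fin n × Fin 2 → ℝ)) (MSet n) ≠ ⊤ := by
  rw [UM, Measure.smul_apply, Measure.restrict_apply_univ, smul_eq_mul] at h
  constructor
  · intro h0; rw [h0] at h; simp at h
  · intro h0; rw [h0] at h; simp at h

lemma UM_stat (h : UM n Set.univ = 1) (i j : Fin n) (hij : i ≠ j) :
    ((UM n).prod I01).map (fun p => stepM n p.1 ((i,j), p.2)) = UM n := by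
  obtain ⟨h0, ht⟩ := UM_aux h
  ext S hS
  have hm := measurable_stepM (i,j)
  rw [Measure.map_apply hm hS, Measure.prod_apply (hm hS)]
  show ∫⁻ y, I01 {l | stepM n y ((i,j), l) ∈ S} ∂(UM n) = UM n S
  rw [UM, lintegral_smul_measure, stat_core _ i j hij ht S hS, Measure.smul_apply]

lemma UM_ae (n : ℕ) : ∀ᵐ y ∂(UM n), y ∈ MSet n := by
  unfold UM
  apply Measure.ae_smul_measure
  exact ae_restrict_mem measurableSet_MSet

lemma I01_le (r : ℝ) : I01 {l | l ≤ r} ≤ ENNReal.ofReal r := by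
  change I01 (Set.Iic r) ≤ _
  rw [I01, Measure.restrict_apply measurableSet_Iic]
  refine (measure_mono (t := Set.Icc 0 r) ?_).trans ?_
  · rintro l ⟨h1, h2⟩; exact ⟨h2.1, h1⟩
  · rw [Real.volume_Icc]; simp

lemma I01_ge (r : ℝ) : I01 {l | 1 - r ≤ l} ≤ ENNReal.ofReal r := by
  change I01 (Set.Ici (1 - r)) ≤ _
  rw [I01, Measure.restrict_apply measurableSet_Ici]
  refine (measure_mono (t := Set.Icc (1 - r) 1) ?_).trans ?_
  · rintro l ⟨h1, h2⟩; exact ⟨h1, h2.2⟩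
  · rw [Real.volume_Icc]; simp

lemma anti_pair (h : UM n Set.univ = 1) (i k : Fin n) (hik : i ≠ k) (c : ENNReal)
    (S : Set (Fin n × Fin 2 → ℝ)) (hS : MeasurableSet S)
    (hb : ∀ y ∈ MSet n, I01 {l | stepM n y ((i,k), l) ∈ S} ≤ c) : UM n S ≤ c := by
  have hm := measurable_stepM (i,k)
  rw [← UM_stat h i k hik, Measure.map_apply hm hS, Measure.prod_apply (hm hS)]
  calc ∫⁻ y, I01 {l | stepM n y ((i,k), l) ∈ S} ∂(UM n) ≤ ∫⁻ y, c ∂(UM n) := by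
        apply lintegral_mono_ae
        filter_upwards [UM_ae n] with y hy using hb y hy
    _ = c := by rw [lintegral_const, h, mul_one]

lemma lenF_mid {s : ℝ} (h1 : 1 ≤ s) (h3 : s ≤ 3) : 1 ≤ lenF s := by
  rcases lenF_cases s with ⟨a, b, c⟩ | ⟨a, b, c⟩ <;> linarith

lemma hiF_le2 (s : ℝ) : hiF s ≤ 2 := min_le_right _ _

lemma sF_step (i k : Fin n) (hik : i ≠ k) (y : Fin n × Fin 2 → ℝ) (l : ℝ) :
    sF i k (stepM n y ((i,k), l)) = sF i k y := by
  unfold sF; rw [stepM_j _ _ _ hik]; ring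

lemma anti_lo (h : UM n Set.univ = 1) (hn : 2 ≤ n) (i : Fin n) (r : ℝ) (hr : r ≤ 1) :
    UM n {y | y (i,0) ≤ r} ≤ n * ENNReal.ofReal r := by
  have key : ∀ k, UM n {y | i ≠ k ∧ 1 ≤ sF i k y ∧ sF i k y ≤ 3 ∧ y (i,0) ≤ r} ≤ ENNReal.ofReal r := by
    intro k
    by_cases hik : i = k
    · simp [hik]
    apply anti_pair h i k hik
    · have hs := measurable_sF i k
      have e : {y : Fin n × Fin 2 → ℝ | i ≠ k ∧ 1 ≤ sF i k y ∧ sF i k y ≤ 3 ∧ y (i,0) ≤ r} =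
        {y | 1 ≤ sF i k y} ∩ ({y | sF i k y ≤ 3} ∩ {y | y (i,0) ≤ r}) := by ext y; simp [hik]
      rw [e]
      exact (measurableSet_le measurable_const hs).inter ((measurableSet_le hs measurable_const).inter
        (measurableSet_le (by fun_prop) measurable_const))
    · intro y hy
      refine (measure_mono_ae ?_).trans (I01_le r)
      filter_upwards [I01_ae] with l hl
      rintro ⟨-, h1, h2, h3⟩
      show l ≤ r
      rw [sF_step i k hik] at h1 h2
      rw [stepM_i] at h3
      change loF (sF i k y) + l * lenF (sF i k y) ≤ r at h3
      have := lenF_mid h1 h2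
      have := loF_nonneg (sF i k y)
      nlinarith
  calc UM n {y | y (i,0) ≤ r} ≤ UM n (⋃ k, {y | i ≠ k ∧ 1 ≤ sF i k y ∧ sF i k y ≤ 3 ∧ y (i,0) ≤ r}) := by
        apply measure_mono_ae
        filter_upwards [UM_ae n] with y hy hyr
        change y (i,0) ≤ r at hyr
        show y ∈ ⋃ k, {y | i ≠ k ∧ 1 ≤ sF i k y ∧ sF i k y ≤ 3 ∧ y (i,0) ≤ r}
        rw [Set.mem_iUnion]
        have hy' := mem_MSet_iff.1 hy
        by_contra hcon
        push Not at hcon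
        have hlt : ∀ k, k ≠ i → y (k,0) < 1 := by
          intro k hk
          by_contra h1
          push Not at h1
          apply hcon k
          have := hy'.1 k
          have := hy'.1 i
          refine ⟨hk.symm, ?_, ?_, hyr⟩ <;> unfold sF <;> linarith
        have : ∑ k, y (k,0) < ∑ k : Fin n, (1:ℝ) := by
          apply Finset.sum_lt_sum
          · intro k _
            by_cases hk : k = i
            · subst hk; linarith
            · exact (hlt k hk).le
          · have : Nontrivial (Fin n) := Fin.nontrivial_iff_two_le.2 hn
            obtain ⟨k, hk⟩ := exists_ne i
            exact ⟨k, Finset.mem_univ _, hlt k hk⟩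
        rw [hy'.2.2] at this
        simp at this
    _ ≤ ∑ k : Fin n, ENNReal.ofReal r := (measure_iUnion_fintype_le _ _).trans (Finset.sum_le_sum fun k _ => key k)
    _ = n * ENNReal.ofReal r := by simp

lemma anti_hi (h : UM n Set.univ = 1) (hn : 2 ≤ n) (i : Fin n) (r : ℝ) (hr : r ≤ 1) :
    UM n {y | 2 - r ≤ y (i,0)} ≤ n * ENNReal.ofReal r := by
  have key : ∀ k, UM n {y | i ≠ k ∧ 1 ≤ sF i k y ∧ sF i k y ≤ 3 ∧ 2 - r ≤ y (i,0)} ≤ ENNReal.ofReal r := by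
    intro k
    by_cases hik : i = k
    · simp [hik]
    apply anti_pair h i k hik
    · have hs := measurable_sF i k
      have e : {y : Fin n × Fin 2 → ℝ | i ≠ k ∧ 1 ≤ sF i k y ∧ sF i k y ≤ 3 ∧ 2 - r ≤ y (i,0)} =
        {y | 1 ≤ sF i k y} ∩ ({y | sF i k y ≤ 3} ∩ {y | 2 - r ≤ y (i,0)}) := by ext y; simp [hik]
      rw [e]
      exact (measurableSet_le measurable_const hs).inter ((measurableSet_le hs measurable_const).inter
        (measurableSet_le measurable_const (by fun_prop)))
    · intro y hy
      refine (measure_mono_ae ?_).trans (I01_ge r)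
      filter_upwards [I01_ae] with l hl
      rintro ⟨-, h1, h2, h3⟩
      show 1 - r ≤ l
      rw [sF_step i k hik] at h1 h2
      rw [stepM_i] at h3
      change 2 - r ≤ loF (sF i k y) + l * lenF (sF i k y) at h3
      have := lenF_mid h1 h2
      have h5 := hiF_le2 (sF i k y)
      have h6 : hiF (sF i k y) = loF (sF i k y) + lenF (sF i k y) := by unfold lenF; ring
      nlinarith
  calc UM n {y | 2 - r ≤ y (i,0)} ≤ UM n (⋃ k, {y | i ≠ k ∧ 1 ≤ sF i k y ∧ sF i k y ≤ 3 ∧ 2 - r ≤ y (i,0)}) := by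
        apply measure_mono_ae
        filter_upwards [UM_ae n] with y hy hyr
        change 2 - r ≤ y (i,0) at hyr
        show y ∈ ⋃ k, {y | i ≠ k ∧ 1 ≤ sF i k y ∧ sF i k y ≤ 3 ∧ 2 - r ≤ y (i,0)}
        rw [Set.mem_iUnion]
        have hy' := mem_MSet_iff.1 hy
        by_contra hcon
        push Not at hcon
        have hlt : ∀ k, k ≠ i → 1 < y (k,0) := by
          intro k hk
          by_contra h1
          push Not at h1
          apply hcon k
          have := hy'.1 k
          have := hy'.1 i
          refine ⟨hk.symm, ?_, ?_, hyr⟩ <;> unfold sF <;> linarith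
        have : ∑ k : Fin n, (1:ℝ) < ∑ k, y (k,0) := by
          apply Finset.sum_lt_sum
          · intro k _
            by_cases hk : k = i
            · subst hk; linarith
            · exact (hlt k hk).le
          · have : Nontrivial (Fin n) := Fin.nontrivial_iff_two_le.2 hn
            obtain ⟨k, hk⟩ := exists_ne i
            exact ⟨k, Finset.mem_univ _, hlt k hk⟩
        rw [hy'.2.2] at this
        simp at this
    _ ≤ ∑ k : Fin n, ENNReal.ofReal r := (measure_iUnion_fintype_le _ _).trans (Finset.sum_le_sum fun k _ => key k)
    _ = n * ENNReal.ofReal r := by simp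

lemma anti_len (h : UM n Set.univ = 1) (hn : 2 ≤ n) (i j : Fin n) (r : ℝ) (h0 : 0 ≤ r) (hr : r ≤ 1) :
    UM n {y | lenF (y (i,0) + y (j,0)) < r} ≤ ENNReal.ofReal (2 * n * r) := by
  calc UM n {y | lenF (y (i,0) + y (j,0)) < r} ≤ UM n ({y | y (i,0) ≤ r} ∪ {y | 2 - r ≤ y (i,0)}) := by
        apply measure_mono_ae
        filter_upwards [UM_ae n] with y hy hyr
        change lenF (y (i,0) + y (j,0)) < r at hyr
        have h1 := MSet_le2 hy i
        have h2 := MSet_le2 hy j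
        rcases lenF_cases (y (i,0) + y (j,0)) with ⟨a, b, c⟩ | ⟨a, b, c⟩
        · left; show y (i,0) ≤ r; linarith
        · right; show 2 - r ≤ y (i,0); linarith
    _ ≤ n * ENNReal.ofReal r + n * ENNReal.ofReal r :=
      (measure_union_le _ _).trans (add_le_add (anti_lo h hn i r hr) (anti_hi h hn i r hr))
    _ = ENNReal.ofReal (2 * n * r) := by
      rw [ENNReal.ofReal_mul (by positivity), ENNReal.ofReal_mul (by positivity)]
      simp; ring

/-- number of classes of a labelling -/
def KL (L : Fin n → Fin n) : ℕ := (Finset.univ.image L).card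

lemma KL_merge (L : Fin n → Fin n) (e : Fin n × Fin n) (h : L e.1 ≠ L e.2) :
    KL (mergeL L e) = KL L - 1 := by
  have : Finset.univ.image (mergeL L e) = (Finset.univ.image L).erase (L e.1) := by
    ext b
    simp only [Finset.mem_image, Finset.mem_univ, true_and, Finset.mem_erase, mergeL]
    constructor
    · rintro ⟨k, rfl⟩
      split_ifs with h'
      · exact ⟨h.symm, e.2, rfl⟩
      · exact ⟨h', k, rfl⟩
    · rintro ⟨hb, k, rfl⟩
      exact ⟨k, by rw [if_neg hb]⟩
  rw [KL, this, Finset.card_erase_of_mem (by simp), KL]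

lemma KL_same (L : Fin n → Fin n) (e : Fin n × Fin n) (h : L e.1 = L e.2) : mergeL L e = L :=
  mergeL_same L e.1 e.2 h

lemma sum_blk_sq (L : Fin n → Fin n) (m : ℕ) (hm : KL L = m + 1) :
    ∑ b ∈ Finset.univ.image L, ((blk L b).card : ℝ) ^ 2 ≤ ((n:ℝ) - m) ^ 2 + m := by
  have hs : ∑ b ∈ Finset.univ.image L, ((blk L b).card : ℝ) = n := by
    have := Finset.card_eq_sum_card_image L (Finset.univ : Finset (Fin n))
    rw [Finset.card_univ, Fintype.card_fin] at this
    conv_rhs => rw [this]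
    push_cast
    rfl
  have h1 : ∀ b ∈ Finset.univ.image L, (0:ℝ) ≤ (blk L b).card - 1 := by
    intro b hb
    obtain ⟨k, -, rfl⟩ := Finset.mem_image.1 hb
    have : 0 < (blk L (L k)).card := Finset.card_pos.2 ⟨k, by simp [blk]⟩
    have : (1:ℝ) ≤ (blk L (L k)).card := by exact_mod_cast this
    linarith
  have hK : ((Finset.univ.image L).card : ℝ) = m + 1 := by
    have := hm; unfold KL at this; rw [this]; push_cast; ring
  have hx : ∑ b ∈ Finset.univ.image L, (((blk L b).card : ℝ) - 1) = n - m - 1 := by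
    rw [Finset.sum_sub_distrib, hs, Finset.sum_const, nsmul_eq_mul, hK]; ring
  have hsq : ∑ b ∈ Finset.univ.image L, (((blk L b).card : ℝ) - 1) ^ 2 ≤ ((n:ℝ) - m - 1) ^ 2 := by
    calc ∑ b ∈ Finset.univ.image L, (((blk L b).card : ℝ) - 1) ^ 2
        ≤ ∑ b ∈ Finset.univ.image L, (((blk L b).card : ℝ) - 1) * (n - m - 1) := by
          apply Finset.sum_le_sum
          intro b hb
          rw [sq]
          apply mul_le_mul_of_nonneg_left _ (h1 b hb)
          rw [← hx]
          exact Finset.single_le_sum (f := fun b => ((blk L b).card : ℝ) - 1) h1 hb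
      _ = ((n:ℝ) - m - 1) ^ 2 := by rw [← Finset.sum_mul, hx]; ring
  have e : ∑ b ∈ Finset.univ.image L, ((blk L b).card : ℝ) ^ 2 =
      ∑ b ∈ Finset.univ.image L, (((blk L b).card : ℝ) - 1) ^ 2 +
      (2 * ∑ b ∈ Finset.univ.image L, ((blk L b).card : ℝ) - (Finset.univ.image L).card) := by
    rw [Finset.mul_sum, Finset.cast_card, ← Finset.sum_sub_distrib, ← Finset.sum_add_distrib]
    apply Finset.sum_congr rfl
    intro b _; ring
  rw [e, hs, hK]
  nlinarith

/-- pairs joining different classes -/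
def mrgF (L : Fin n → Fin n) : Finset (Fin n × Fin n) := (pairsF n).filter fun e => L e.1 ≠ L e.2

lemma card_same (L : Fin n → Fin n) :
    ((Finset.univ.filter fun e : Fin n × Fin n => L e.1 = L e.2).card : ℝ) =
      ∑ b ∈ Finset.univ.image L, ((blk L b).card : ℝ) ^ 2 := by
  have : (Finset.univ.filter fun e : Fin n × Fin n => L e.1 = L e.2) =
      (Finset.univ.image L).biUnion fun b => blk L b ×ˢ blk L b := by
    ext ⟨i, j⟩
    simp only [Finset.mem_filter, Finset.mem_univ, true_and, Finset.mem_biUnion, Finset.mem_image,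
      Finset.mem_product, blk, exists_exists_eq_and]
    constructor
    · intro h; exact ⟨i, rfl, h.symm⟩
    · rintro ⟨k, h1, h2⟩; rw [h1, h2]
  rw [this, Finset.card_biUnion]
  · push_cast
    apply Finset.sum_congr rfl
    intro b _
    rw [Finset.card_product]; push_cast; ring
  · intro b _ b' _ hbb
    rw [Function.onFun, Finset.disjoint_left]
    rintro ⟨i, j⟩ h1 h2
    simp only [Finset.mem_product, blk, Finset.mem_filter, Finset.mem_univ, true_and] at h1 h2
    exact hbb (h1.1.symm.trans h2.1)

lemma card_half (P : Fin n × Fin n → Prop) [DecidablePred P] (hsym : ∀ i j, P (i,j) ↔ P (j,i)) (hirr : ∀ i, ¬ P (i,i)) :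
    (Finset.univ.filter P).card = 2 * ((pairsF n).filter P).card := by
  have h1 : (Finset.univ.filter P) = ((pairsF n).filter P) ∪ ((pairsF n).filter P).map (Equiv.prodComm _ _).toEmbedding := by
    ext ⟨i, j⟩
    simp only [pairsF, Finset.mem_filter, Finset.mem_univ, true_and, Finset.mem_union, Finset.mem_map,
      Equiv.toEmbedding_apply, Prod.exists, Equiv.prodComm_apply, Prod.swap_prod_mk, Prod.mk.injEq]
    constructor
    · intro h
      rcases lt_trichotomy i j with h2 | h2 | h2
      · exact Or.inl ⟨h2, h⟩
      · subst h2; exact absurd h (hirr i)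
      · exact Or.inr ⟨j, i, ⟨h2, (hsym i j).1 h⟩, rfl, rfl⟩
    · rintro (⟨_, h⟩ | ⟨a, b, ⟨_, h⟩, rfl, rfl⟩)
      · exact h
      · exact (hsym _ _).1 h
  rw [h1, Finset.card_union_of_disjoint, Finset.card_map]
  · ring
  · rw [Finset.disjoint_left]
    rintro ⟨i, j⟩ h2 h3
    simp only [pairsF, Finset.mem_filter, Finset.mem_univ, true_and, Finset.mem_map,
      Equiv.toEmbedding_apply, Prod.exists, Equiv.prodComm_apply, Prod.swap_prod_mk, Prod.mk.injEq] at h2 h3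
    obtain ⟨a, b, ⟨h4, _⟩, rfl, rfl⟩ := h3
    exact absurd h2.1 (not_lt.2 h4.le)

lemma card_mrg (L : Fin n → Fin n) (m : ℕ) (hm : KL L = m + 1) :
    (m:ℝ) * (2 * n - m - 1) / 2 ≤ (mrgF L).card := by
  have h1 := card_half (fun e : Fin n × Fin n => L e.1 ≠ L e.2) (fun i j => by simp [ne_comm]) (fun i => by simp)
  have h2 := Finset.card_filter_add_card_filter_not (s := (Finset.univ : Finset (Fin n × Fin n))) (fun e => L e.1 = L e.2)
  have h3 := card_same L
  have h4 := sum_blk_sq L m hm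
  rw [Finset.card_univ, Fintype.card_prod, Fintype.card_fin] at h2
  have h5 : (((Finset.univ : Finset (Fin n × Fin n)).filter fun e => ¬ L e.1 = L e.2).card : ℝ) = 2 * (mrgF L).card := by
    have : ((Finset.univ : Finset (Fin n × Fin n)).filter fun e => ¬ L e.1 = L e.2).card = 2 * (mrgF L).card := h1
    rw [this]; push_cast; ring
  have h6 : ((Finset.univ.filter fun e : Fin n × Fin n => L e.1 = L e.2).card : ℝ) +
    (((Finset.univ : Finset (Fin n × Fin n)).filter fun e => ¬ L e.1 = L e.2).card : ℝ) = n * n := by exact_mod_cast h2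
  nlinarith

lemma card_pairsF (n : ℕ) : ((pairsF n).card : ℝ) = n * (n - 1) / 2 := by
  have h1 := card_half (n := n) (fun e : Fin n × Fin n => e.1 ≠ e.2) (fun i j => by simp [ne_comm]) (fun i => by simp)
  have h2 := Finset.card_filter_add_card_filter_not (s := (Finset.univ : Finset (Fin n × Fin n))) (fun e => e.1 = e.2)
  have h0 : ((Finset.univ : Finset (Fin n × Fin n)).filter fun e => e.1 = e.2).card = n := by
    have : ((Finset.univ : Finset (Fin n × Fin n)).filter fun e => e.1 = e.2) = Finset.univ.image (fun i : Fin n => (i, i)) := by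
      ext ⟨i, j⟩; simp
    rw [this, Finset.card_image_of_injective _ (fun a b h => (Prod.ext_iff.1 h).1)]; simp
  have h3 : (pairsF n).filter (fun e : Fin n × Fin n => e.1 ≠ e.2) = pairsF n := by
    apply Finset.filter_true_of_mem
    intro e he
    simp only [pairsF, Finset.mem_filter, Finset.mem_univ, true_and] at he
    exact he.ne
  rw [Finset.card_univ, Fintype.card_prod, Fintype.card_fin, h0] at h2
  rw [h3] at h1
  have h4 : ((Finset.univ : Finset (Fin n × Fin n)).filter fun e => ¬ e.1 = e.2).card = 2 * (pairsF n).card := h1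
  rw [h4] at h2
  have h5 : (n:ℝ) + 2 * (pairsF n).card = n * n := by exact_mod_cast h2
  linarith

/-- probability that a random sequence of merges does not end with one class -/
def Dr : ℕ → (Fin n → Fin n) → ℝ
  | 0, L => if 1 < KL L then 1 else 0
  | t + 1, L => ((pairsF n).card : ℝ)⁻¹ * ∑ e ∈ pairsF n, Dr t (mergeL L e)

/-- lower bound for the merging probability -/
def pM (n m : ℕ) : ℝ := m * (2 * n - m - 1) / (n * (n - 1))

lemma KL_le (L : Fin n → Fin n) : KL L ≤ n := by
  have := Finset.card_le_univ (Finset.univ.image L)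
  simpa [KL] using this

lemma Dr_bound (hn : 2 ≤ n) (G : ℕ → ℕ → ℝ)
    (h0 : ∀ m, m + 1 ≤ n → (if 0 < m then 1 else 0) ≤ G 0 m)
    (hmono : ∀ t m, m + 2 ≤ n → G t m ≤ G t (m+1))
    (hstep0 : ∀ t, G t 0 ≤ G (t+1) 0)
    (hstep : ∀ t m, m + 2 ≤ n → G t (m+1) - pM n (m+1) * (G t (m+1) - G t m) ≤ G (t+1) (m+1))
    (t : ℕ) (m : ℕ) (L : Fin n → Fin n) (hm : KL L = m + 1) : Dr t L ≤ G t m := by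
  have hN : (0:ℝ) < (pairsF n).card := by
    rw [card_pairsF]
    have : (2:ℝ) ≤ n := by exact_mod_cast hn
    apply div_pos _ (by norm_num)
    apply mul_pos <;> linarith
  induction t generalizing m L with
  | zero =>
    refine le_trans (le_of_eq ?_) (h0 m (by rw [← hm]; exact KL_le L))
    simp [Dr, hm]
  | succ t ih =>
    rw [Dr]
    cases m with
    | zero =>
      have : ∀ e ∈ pairsF n, Dr t (mergeL L e) ≤ G t 0 := by
        intro e _
        apply ih
        have : mergeL L e = L := by
          apply KL_same
          unfold KL at hm
          rw [zero_add] at hm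
          obtain ⟨b, hb⟩ := Finset.card_eq_one.1 hm
          have h1 : L e.1 ∈ Finset.univ.image L := by simp
          have h2 : L e.2 ∈ Finset.univ.image L := by simp
          rw [hb, Finset.mem_singleton] at h1 h2
          rw [h1, h2]
        rw [this, hm]
      calc _ ≤ ((pairsF n).card : ℝ)⁻¹ * ∑ e ∈ pairsF n, G t 0 := by
            apply mul_le_mul_of_nonneg_left (Finset.sum_le_sum this) (by positivity)
        _ = G t 0 := by rw [Finset.sum_const, nsmul_eq_mul]; field_simp
        _ ≤ _ := hstep0 t
    | succ m =>
      have hmn : m + 2 ≤ n := by rw [← hm]; exact KL_le L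
      have : ∀ e ∈ pairsF n, Dr t (mergeL L e) ≤ G t (m+1) - (if L e.1 ≠ L e.2 then 1 else 0) * (G t (m+1) - G t m) := by
        intro e _
        split_ifs with h
        · have := ih m (mergeL L e) (by rw [KL_merge L e h, hm]; rfl)
          linarith
        · rw [KL_same L e (not_not.1 h)]
          have := ih (m+1) L hm
          linarith
      have hc := card_mrg L (m+1) hm
      have hd : 0 ≤ G t (m+1) - G t m := by linarith [hmono t m hmn]
      calc _ ≤ ((pairsF n).card : ℝ)⁻¹ * ∑ e ∈ pairsF n, (G t (m+1) - (if L e.1 ≠ L e.2 then 1 else 0) * (G t (m+1) - G t m)) := by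
            apply mul_le_mul_of_nonneg_left (Finset.sum_le_sum this) (by positivity)
        _ = G t (m+1) - ((mrgF L).card / (pairsF n).card) * (G t (m+1) - G t m) := by
          rw [Finset.sum_sub_distrib, Finset.sum_const, nsmul_eq_mul, ← Finset.sum_mul, Finset.sum_boole]
          rw [mrgF]; field_simp
        _ ≤ G t (m+1) - pM n (m+1) * (G t (m+1) - G t m) := by
          have : pM n (m+1) ≤ (mrgF L).card / (pairsF n).card := by
            rw [le_div_iff₀ hN, card_pairsF]
            refine le_trans (le_of_eq ?_) hc
            have : (2:ℝ) ≤ n := by exact_mod_cast hn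
            have h1 : (n:ℝ) ≠ 0 := by linarith
            have h2 : (n:ℝ) - 1 ≠ 0 := by linarith
            rw [pM]; field_simp
          nlinarith
        _ ≤ _ := hstep t m hmn

def phiM (n m : ℕ) : ℝ := m * (2 * n - 3) / (2 * n - m - 2)

lemma phi_diff (hn : 2 ≤ n) (m : ℕ) (hm : m + 2 ≤ n) :
    1 ≤ phiM n (m+1) - phiM n m ∧ pM n (m+1) * (phiM n (m+1) - phiM n m) = 2 / n * phiM n (m+1) := by
  have h1 : (m:ℝ) + 2 ≤ n := by exact_mod_cast hm
  have h2 : (2:ℝ) ≤ n := by exact_mod_cast hn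
  have h0 : (0:ℝ) ≤ m := by positivity
  have a1 : 0 < 2 * (n:ℝ) - (m + 1) - 2 := by linarith
  have a2 : 0 < 2 * (n:ℝ) - m - 2 := by linarith
  have a3 : 0 < (n:ℝ) - 1 := by linarith
  have e : phiM n (m+1) - phiM n m = (2 * n - 3) * (2 * n - 2) / ((2 * (n:ℝ) - (m + 1) - 2) * (2 * n - m - 2)) := by
    unfold phiM
    push_cast
    rw [div_sub_div _ _ a1.ne' a2.ne']
    congr 1; ring
  refine ⟨?_, ?_⟩
  · rw [e, le_div_iff₀ (mul_pos a1 a2), one_mul]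
    apply mul_le_mul <;> linarith
  · rw [e]
    unfold phiM pM
    push_cast
    have a4 : 2 * (n:ℝ) - (m + 1) - 1 = 2 * n - m - 2 := by ring
    rw [a4]
    field_simp

lemma phi_zero : phiM n 0 = 0 := by simp [phiM]

lemma phi_ge (hn : 2 ≤ n) (m : ℕ) (hm : m + 2 ≤ n) : 1 ≤ phiM n (m+1) := by
  induction m with
  | zero =>
    have := (phi_diff hn 0 hm).1
    rw [phi_zero] at this; linarith
  | succ k ih =>
    have h1 := (phi_diff hn (k+1) hm).1
    have := ih (by omega)
    linarith

lemma phi_last (hn : 2 ≤ n) : phiM n (n-1) = 2 * n - 3 := by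
  have h2 : (2:ℝ) ≤ n := by exact_mod_cast hn
  have e : ((n - 1 : ℕ) : ℝ) = (n:ℝ) - 1 := by rw [Nat.cast_sub (by omega)]; simp
  unfold phiM
  rw [e]
  have : 2 * (n:ℝ) - (n - 1) - 2 = n - 1 := by ring
  rw [this]
  have : (n:ℝ) - 1 ≠ 0 := by linarith
  field_simp

lemma KL_id (hn : 2 ≤ n) : KL (id : Fin n → Fin n) = (n - 1) + 1 := by
  simp [KL]; omega

lemma Dr_G1 (hn : 2 ≤ n) (t : ℕ) : Dr t (id : Fin n → Fin n) ≤ (2 * n - 3) * (1 - 2 / (n:ℝ)) ^ t := by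
  have h2 : (2:ℝ) ≤ n := by exact_mod_cast hn
  have hb : 0 ≤ 1 - 2 / (n:ℝ) := by
    rw [sub_nonneg, div_le_one (by linarith)]; exact h2
  rw [← phi_last hn]
  refine Dr_bound hn (fun t m => phiM n m * (1 - 2 / (n:ℝ)) ^ t) ?_ ?_ ?_ ?_ t (n-1) id (KL_id hn)
  · intro m hm
    cases m with
    | zero => simp [phi_zero]
    | succ m => simpa using phi_ge hn m hm
  · intro t m hm
    apply mul_le_mul_of_nonneg_right _ (pow_nonneg hb t)
    linarith [(phi_diff hn m hm).1]
  · intro t; simp [phi_zero]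
  · intro t m hm
    have h := (phi_diff hn m hm).2
    apply le_of_eq
    rw [pow_succ]
    linear_combination (-(1 - 2 / (n:ℝ)) ^ t) * h

lemma log16_le : Real.log 16 ≤ 2.7726 := by
  have : (16:ℝ) = 2 ^ (4:ℕ) := by norm_num
  rw [this, Real.log_pow]
  have := Real.log_two_lt_d9
  push_cast
  linarith

/-- key real inequality for the second bound -/
lemma G2_key (n : ℕ) (hn : 4096 ≤ n) (q p φ Δ : ℝ) (hq0 : 0 < q) (hq1 : q ≤ 15/16) (hp : 0 ≤ p)
    (hΔ : 1 ≤ Δ) (hφ : 0 ≤ φ) (hpΔ : p * Δ = 2 / n * φ)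
    (hbig : (1/16 : ℝ) ≤ (1 - (1 - 1 / ((n:ℝ)/2 + 45)) * q) ^ φ) :
    (1 - (1 - 1 / ((n:ℝ)/2 + 45)) * q) ^ φ ≤ (1 - q) ^ φ + p * ((1 - q) ^ (φ - Δ) - (1 - q) ^ φ) := by
  have hn' : (4096:ℝ) ≤ n := by exact_mod_cast hn
  set r' := 1 / ((n:ℝ)/2 + 45) with hr'
  have hr0 : 0 < r' := by rw [hr']; positivity
  have hr1 : r' ≤ 1/2093 := by
    rw [hr']; apply one_div_le_one_div_of_le (by norm_num); linarith
  have hb : 1/16 ≤ 1 - q := by linarith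
  have hb0 : 0 < 1 - q := by linarith
  set y := q / (1 - q) with hy
  have hy0 : 0 < y := div_pos hq0 hb0
  have e1 : 1 - (1 - r') * q = (1 - q) * (1 + r' * y) := by
    rw [hy]; field_simp; ring
  have hyφ : φ * y ≤ 45 := by
    have h1 : (1 - (1 - r') * q) ^ φ ≤ Real.exp (-((1 - r') * q) * φ) := by
      rw [Real.exp_mul]
      apply Real.rpow_le_rpow _ _ hφ
      · nlinarith
      · have := Real.add_one_le_exp (-((1 - r') * q)); linarith
    have h2 : Real.log (1/16) ≤ -((1 - r') * q) * φ := by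
      rw [Real.log_le_iff_le_exp (by norm_num)]; exact hbig.trans h1
    rw [one_div, Real.log_inv] at h2
    have h3 : (1 - r') * (q * φ) ≤ 2.7726 := by linarith [log16_le]
    have h4 : q * φ ≤ 2.7740 := by
      have : 0 ≤ q * φ := by positivity
      nlinarith
    have h5 : φ * y = q * φ / (1 - q) := by rw [hy]; ring
    rw [h5, div_le_iff₀ hb0]
    linarith
  set z := φ * y with hz
  have hz0 : 0 ≤ z := by positivity
  have h3 : (1 + r' * y) ^ φ ≤ 1 + 2 / n * z := by
    have h1 : (1 + r' * y) ^ φ ≤ Real.exp (r' * z) := by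
      have : r' * z = (r' * y) * φ := by rw [hz]; ring
      rw [this, Real.exp_mul]
      apply Real.rpow_le_rpow (by positivity) _ hφ
      have := Real.add_one_le_exp (r' * y); linarith
    have h2 : Real.exp (r' * z) * (1 - r' * z) ≤ 1 := by
      have := Real.add_one_le_exp (-(r' * z))
      calc Real.exp (r' * z) * (1 - r' * z) ≤ Real.exp (r' * z) * Real.exp (-(r' * z)) := by
            apply mul_le_mul_of_nonneg_left _ (Real.exp_pos _).le; linarith
        _ = 1 := by rw [← Real.exp_add]; simp
    have h4 : 0 < 1 - r' * z := by nlinarith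
    have h5 : 1 ≤ (1 - r' * z) * (1 + 2 / n * z) := by
      have e : (1 - r' * z) * (1 + 2 / n * z) - 1 = (2 / n * r' * z) * (45 - z) := by
        rw [hr']; field_simp; ring
      have : 0 ≤ (2 / n * r' * z) * (45 - z) := by
        apply mul_nonneg (by positivity); linarith
      linarith
    have h6 : Real.exp (r' * z) ≤ 1 + 2 / n * z := by
      by_contra hcon
      push Not at hcon
      nlinarith
    exact h1.trans h6
  have h4 : 1 + Δ * y ≤ (1 - q) ^ (-Δ) := by
    have h1 := one_add_mul_self_le_rpow_one_add (s := y) (by linarith) hΔ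
    have h2 : (1 - q) ^ (-Δ) = (1 + y) ^ Δ := by
      rw [Real.rpow_neg hb0.le, ← Real.inv_rpow hb0.le]
      congr 1
      rw [hy]; field_simp; ring
    rw [h2]; exact h1
  rw [e1, Real.mul_rpow hb0.le (by positivity), sub_eq_add_neg φ Δ, Real.rpow_add hb0]
  have hbp : 0 < (1 - q) ^ φ := Real.rpow_pos_of_pos hb0 _
  have : (1 + r' * y) ^ φ ≤ 1 + p * ((1 - q) ^ (-Δ) - 1) := by
    have h5 : p * (Δ * y) ≤ p * ((1 - q) ^ (-Δ) - 1) := by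
      apply mul_le_mul_of_nonneg_left _ hp; linarith
    have h6 : p * (Δ * y) = 2 / n * z := by rw [hz]; linear_combination y * hpΔ
    linarith
  calc (1 - q) ^ φ * (1 + r' * y) ^ φ ≤ (1 - q) ^ φ * (1 + p * ((1 - q) ^ (-Δ) - 1)) :=
        mul_le_mul_of_nonneg_left this hbp.le
    _ = _ := by ring

lemma pM_bd (hn : 2 ≤ n) (m : ℕ) (hm : m + 2 ≤ n) : 0 ≤ pM n (m+1) ∧ pM n (m+1) ≤ 1 := by
  have h1 : (m:ℝ) + 2 ≤ n := by exact_mod_cast hm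
  have h2 : (2:ℝ) ≤ n := by exact_mod_cast hn
  have h0 : (0:ℝ) ≤ m := by positivity
  have h3 : 0 < (n:ℝ) * (n - 1) := by apply mul_pos <;> linarith
  unfold pM
  push_cast
  constructor
  · apply div_nonneg _ h3.le
    apply mul_nonneg <;> linarith
  · rw [div_le_one h3]
    nlinarith

lemma Dr_G2 (hn : 4096 ≤ n) (t : ℕ) : Dr t (id : Fin n → Fin n) ≤
    17/16 - (1 - 15/16 * (1 - 1 / ((n:ℝ)/2 + 45)) ^ t) ^ (2 * (n:ℝ) - 3) := by
  have hn2 : 2 ≤ n := by omega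
  have hn' : (4096:ℝ) ≤ n := by exact_mod_cast hn
  rw [← phi_last hn2]
  set r' := 1 / ((n:ℝ)/2 + 45) with hr'
  have hr0 : 0 < r' := by rw [hr']; positivity
  have hr1 : r' ≤ 1/2093 := by
    rw [hr']; apply one_div_le_one_div_of_le (by norm_num); linarith
  set q : ℕ → ℝ := fun t => 15/16 * (1 - r') ^ t with hq
  have hq0 : ∀ t, 0 < q t := fun t => by
    have : 0 < 1 - r' := by linarith
    simp only [hq]; positivity
  have hq1 : ∀ t, q t ≤ 15/16 := fun t => by
    have : (1 - r') ^ t ≤ 1 := pow_le_one₀ (by linarith) (by linarith)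
    simp only [hq]; linarith
  have hqs : ∀ t, q (t+1) = (1 - r') * q t := fun t => by simp only [hq]; ring
  have key := Dr_bound hn2 (fun t m => 1 - max 0 ((1 - q t) ^ (phiM n m) - 1/16)) ?_ ?_ ?_ ?_ t (n-1) id (KL_id hn2)
  · refine key.trans ?_
    have := le_max_right 0 ((1 - q t) ^ (phiM n (n-1)) - 1/16)
    simp only [hq] at this ⊢
    linarith
  · intro m hm
    cases m with
    | zero =>
      simp only [phi_zero, Real.rpow_zero, lt_irrefl, if_false]
      norm_num
    | succ m =>
      have h1 := phi_ge hn2 m hm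
      have e : 1 - q 0 = 1/16 := by simp only [hq]; norm_num
      have h2 : (1/16 : ℝ) ^ (phiM n (m+1)) ≤ 1/16 := by
        calc (1/16 : ℝ) ^ (phiM n (m+1)) ≤ (1/16 : ℝ) ^ (1:ℝ) :=
              Real.rpow_le_rpow_of_exponent_ge (by norm_num) (by norm_num) h1
          _ = 1/16 := Real.rpow_one _
      simp only [e, Nat.succ_pos, if_true]
      rw [max_eq_left (by linarith)]; norm_num
  · intro t m hm
    have h1 := (phi_diff hn2 m hm).1
    have h2 : (1 - q t) ^ (phiM n (m+1)) ≤ (1 - q t) ^ (phiM n m) :=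
      Real.rpow_le_rpow_of_exponent_ge (by linarith [hq1 t]) (by linarith [hq0 t]) (by linarith)
    have := max_le_max_left 0 (sub_le_sub_right h2 (1/16))
    linarith
  · intro t
    simp only [phi_zero, Real.rpow_zero, le_refl]
  · intro t m hm
    obtain ⟨h1, h2⟩ := phi_diff hn2 m hm
    obtain ⟨hp0, hp1⟩ := pM_bd hn2 m hm
    have hφ := phi_ge hn2 m hm
    set A := max 0 ((1 - q t) ^ (phiM n (m+1)) - 1/16) with hA
    set B := max 0 ((1 - q t) ^ (phiM n m) - 1/16) with hB
    have hA0 : 0 ≤ A := le_max_left _ _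
    have hB0 : 0 ≤ B := le_max_left _ _
    have hA1 : (1 - q t) ^ (phiM n (m+1)) - 1/16 ≤ A := le_max_right _ _
    have hB1 : (1 - q t) ^ (phiM n m) - 1/16 ≤ B := le_max_right _ _
    have goal : max 0 ((1 - q (t+1)) ^ (phiM n (m+1)) - 1/16) ≤ (1 - pM n (m+1)) * A + pM n (m+1) * B := by
      apply max_le
      · have : 0 ≤ 1 - pM n (m+1) := by linarith
        positivity
      · by_cases hbig : (1/16 : ℝ) ≤ (1 - q (t+1)) ^ (phiM n (m+1))
        · have hk := G2_key n hn (q t) (pM n (m+1)) (phiM n (m+1)) (phiM n (m+1) - phiM n m) (hq0 t) (hq1 t) hp0 h1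
            (by linarith) h2 (by rw [hqs] at hbig; exact hbig)
          rw [sub_sub_cancel, ← hr', ← hqs] at hk
          have : (1 - pM n (m+1)) * ((1 - q t) ^ (phiM n (m+1)) - 1/16) ≤ (1 - pM n (m+1)) * A :=
            mul_le_mul_of_nonneg_left hA1 (by linarith)
          have := mul_le_mul_of_nonneg_left hB1 hp0
          linarith
        · have : 0 ≤ (1 - pM n (m+1)) * A + pM n (m+1) * B := by
            have : 0 ≤ 1 - pM n (m+1) := by linarith
            positivity
          push Not at hbig
          linarith
    linarith

lemma exp23 : Real.exp 2.3 ≤ 10 := by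
  have h1 := Real.exp_one_lt_d9
  have h2 : Real.exp 2.3 ^ 10 ≤ 10 ^ 10 := by
    rw [← Real.exp_nat_mul]
    have : ((10:ℕ):ℝ) * 2.3 = ((23:ℕ):ℝ) * 1 := by norm_num
    rw [this, Real.exp_nat_mul]
    calc Real.exp 1 ^ 23 ≤ 2.7182818286 ^ 23 := pow_le_pow_left₀ (Real.exp_pos _).le h1.le _
      _ ≤ 10 ^ 10 := by norm_num
  exact le_of_pow_le_pow_left₀ (by norm_num) (by norm_num) h2

lemma exp02 {x : ℝ} (hx : x ≤ 0.2032) : Real.exp x ≤ 1.2263 := by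
  refine (Real.exp_le_exp.2 hx).trans ?_
  have h1 := Real.exp_one_lt_d9
  have h2 : Real.exp 0.2032 ^ 125 ≤ 1.2263 ^ 125 := by
    rw [← Real.exp_nat_mul]
    have : ((125:ℕ):ℝ) * 0.2032 ≤ ((26:ℕ):ℝ) * 1 - 0.6 := by norm_num
    refine (Real.exp_le_exp.2 this).trans ?_
    have h3 : Real.exp (((26:ℕ):ℝ) * 1 - 0.6) = Real.exp 1 ^ 26 * Real.exp (-0.6) := by
      rw [sub_eq_add_neg, Real.exp_add, Real.exp_nat_mul]
    rw [h3]
    have h4 : Real.exp (-0.6) ≤ 0.55 := by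
      have : Real.exp (-0.6) ^ 5 ≤ 0.55 ^ 5 := by
        rw [← Real.exp_nat_mul]
        have : ((5:ℕ):ℝ) * -0.6 = -((3:ℕ) * 1) := by norm_num
        rw [this, Real.exp_neg, Real.exp_nat_mul]
        have h5 := Real.exp_one_gt_d9
        have h6 : (2.7182818283:ℝ) ^ 3 ≤ Real.exp 1 ^ 3 := pow_le_pow_left₀ (by norm_num) h5.le _
        calc (Real.exp 1 ^ 3)⁻¹ ≤ ((2.7182818283:ℝ) ^ 3)⁻¹ := inv_anti₀ (by norm_num) h6
          _ ≤ 0.55 ^ 5 := by norm_num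
      exact le_of_pow_le_pow_left₀ (by norm_num) (by norm_num) this
    calc Real.exp 1 ^ 26 * Real.exp (-0.6) ≤ 2.7182818286 ^ 26 * 0.55 := by
          apply mul_le_mul (pow_le_pow_left₀ (Real.exp_pos _).le h1.le _) h4 (Real.exp_pos _).le (by positivity)
      _ ≤ 1.2263 ^ 125 := by norm_num
  exact le_of_pow_le_pow_left₀ (by norm_num) (by norm_num) h2

lemma final_u (u : ℝ) (h1 : u ≤ 1) (h2 : 0.793 ≤ u) : 17/16 - u ≤ Real.exp (-(2.3 * u ^ 4)) := by
  set w := 2.3 * (1 - u ^ 4) with hw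
  have e : Real.exp (-(2.3 * u ^ 4)) = Real.exp (-2.3) * Real.exp w := by
    rw [← Real.exp_add, hw]; congr 1; ring
  have h3 : 0.1 ≤ Real.exp (-2.3) := by
    rw [Real.exp_neg]
    have := inv_anti₀ (Real.exp_pos _) exp23
    linarith
  have hf : 1 - u ^ 4 = (1 - u) * (1 + u + u^2 + u^3) := by ring
  have hw0 : 0 ≤ w := by
    rw [hw, hf]
    have : 0 ≤ 1 - u := by linarith
    have : 0 ≤ u := by linarith
    positivity
  have h4 : 1 + w + w ^ 2 / 2 ≤ Real.exp w := Real.quadratic_le_exp_of_nonneg hw0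
  have h5 : 0.1 * (1 + w + w ^ 2 / 2) ≤ Real.exp (-2.3) * Real.exp w :=
    mul_le_mul h3 h4 (by positivity) (Real.exp_pos _).le
  rw [e]
  refine le_trans ?_ h5
  rcases le_total 0.875 u with h | h
  · have a1 : 3.3 ≤ 1 + u + u^2 + u^3 := by nlinarith
    have a2 : 2.3 * ((1 - u) * 3.3) ≤ w := by
      rw [hw, hf]
      have := mul_le_mul_of_nonneg_left a1 (show 0 ≤ 1 - u by linarith)
      linarith
    nlinarith
  · have a1 : 2.9 ≤ 1 + u + u^2 + u^3 := by
      have : (0.793:ℝ)^2 ≤ u^2 := pow_le_pow_left₀ (by norm_num) h2 2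
      have : (0.793:ℝ)^3 ≤ u^3 := pow_le_pow_left₀ (by norm_num) h2 3
      norm_num at *
      linarith
    have a2 : 2.3 * ((1 - u) * 2.9) ≤ w := by
      rw [hw, hf]
      have := mul_le_mul_of_nonneg_left a1 (show 0 ≤ 1 - u by linarith)
      linarith
    nlinarith [sq_nonneg (w - 0.95)]

lemma log_n_bd (hn : 4096 ≤ n) : Real.log n ≤ 8.318 / 4096 * n := by
  have hn' : (4096:ℝ) ≤ n := by exact_mod_cast hn
  have h1 := Real.log_le_sub_one_of_pos (x := (n:ℝ)/4096) (by positivity)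
  rw [Real.log_div (by positivity) (by norm_num)] at h1
  have h2 : Real.log 4096 = 12 * Real.log 2 := by
    have : (4096:ℝ) = 2 ^ (12:ℕ) := by norm_num
    rw [this, Real.log_pow]; push_cast; ring
  have h3 := Real.log_two_lt_d9
  linarith

lemma Dr_final (hn : 4096 ≤ n) (c : ℝ) (hc : 0 < c) (T : ℕ)
    (hT : (1 / 2 + 2 * c) * n * Real.log n ≤ (T : ℝ)) : Dr T (id : Fin n → Fin n) ≤ (n:ℝ) ^ (-c) := by
  have hn' : (4096:ℝ) ≤ n := by exact_mod_cast hn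
  have hn0 : (0:ℝ) < n := by linarith
  have hlog : 0 < Real.log n := Real.log_pos (by linarith)
  set u := (n:ℝ) ^ (-c) with hu
  have hu0 : 0 < u := Real.rpow_pos_of_pos hn0 _
  have hu1 : u ≤ 1 := Real.rpow_le_one_of_one_le_of_nonpos (by linarith) (by linarith)
  have hue : u = Real.exp (-(c * Real.log n)) := by
    rw [hu, Real.rpow_def_of_pos hn0]; congr 1; ring
  have hu4 : u ^ 4 = Real.exp (-(4 * (c * Real.log n))) := by
    rw [hue, ← Real.exp_nat_mul]; congr 1; push_cast; ring
  have hninv : Real.exp (-Real.log n) = (n:ℝ)⁻¹ := by rw [Real.exp_neg, Real.exp_log hn0]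
  rcases le_total (2 * u ^ 3) 1 with h | h
  · refine (Dr_G1 (by omega) T).trans ?_
    have h1 : (1 - 2 / (n:ℝ)) ^ T ≤ Real.exp (-(2 / n * T)) := by
      have : Real.exp (-(2 / (n:ℝ) * T)) = Real.exp (-(2 / n)) ^ T := by
        rw [← Real.exp_nat_mul]; congr 1; ring
      rw [this]
      apply pow_le_pow_left₀
      · rw [sub_nonneg, div_le_one hn0]; linarith
      · have := Real.add_one_le_exp (-(2 / (n:ℝ))); linarith
    have h2 : (1 + 4 * c) * Real.log n ≤ 2 / n * T := by
      have : 2 / n * ((1 / 2 + 2 * c) * n * Real.log n) ≤ 2 / n * T :=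
        mul_le_mul_of_nonneg_left hT (by positivity)
      refine le_trans (le_of_eq ?_) this
      field_simp; ring
    have h3 : (1 - 2 / (n:ℝ)) ^ T ≤ (n:ℝ)⁻¹ * u ^ 4 := by
      refine h1.trans ?_
      rw [hu4, ← hninv, ← Real.exp_add]
      apply Real.exp_le_exp.2; linarith
    calc (2 * (n:ℝ) - 3) * (1 - 2 / (n:ℝ)) ^ T ≤ (2 * n) * ((n:ℝ)⁻¹ * u ^ 4) := by
          apply mul_le_mul (by linarith) h3 _ (by positivity)
          apply pow_nonneg
          rw [sub_nonneg, div_le_one hn0]; linarith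
      _ = 2 * u ^ 3 * u := by field_simp
      _ ≤ u := by nlinarith
  · have hu793 : 0.793 ≤ u := by
      by_contra hcon
      push Not at hcon
      have : u ^ 3 ≤ 0.793 ^ 3 := pow_le_pow_left₀ hu0.le hcon.le 3
      norm_num at this
      linarith
    have hcl : c * Real.log n ≤ 0.232 := by
      have h1 : Real.log 0.793 ≤ Real.log u := Real.log_le_log (by norm_num) hu793
      rw [hue, Real.log_exp] at h1
      have h2 : -0.232 ≤ Real.log 0.793 := by
        have : Real.log 0.793 = -Real.log (0.793⁻¹) := by rw [Real.log_inv]; ring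
        rw [this]
        have h3 : 3 * Real.log (0.793⁻¹ : ℝ) ≤ Real.log 2 + 0.0028 := by
          have : 3 * Real.log (0.793⁻¹ : ℝ) = Real.log (2 * ((0.793⁻¹) ^ 3 / 2)) := by
            rw [mul_div_cancel₀ _ (by norm_num), Real.log_pow]; push_cast; ring
          rw [this, Real.log_mul (by norm_num) (by norm_num)]
          have := Real.log_le_sub_one_of_pos (x := ((0.793:ℝ)⁻¹) ^ 3 / 2) (by norm_num)
          norm_num at this ⊢
          linarith
        have := Real.log_two_lt_d9
        linarith
      linarith
    refine (Dr_G2 hn T).trans ?_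
    set r' := 1 / ((n:ℝ)/2 + 45) with hr'
    have hr0 : 0 < r' := by rw [hr']; positivity
    have hr1 : r' ≤ 1/2093 := by
      rw [hr']; apply one_div_le_one_div_of_le (by norm_num); linarith
    set q := 15/16 * (1 - r') ^ T with hq
    have hq0 : 0 < q := by
      have : 0 < 1 - r' := by linarith
      rw [hq]; positivity
    have h1 : (1 - r') ^ T ≤ Real.exp (-(r' * T)) := by
      have : Real.exp (-(r' * T)) = Real.exp (-r') ^ T := by
        rw [← Real.exp_nat_mul]; congr 1; ring
      rw [this]
      apply pow_le_pow_left₀ (by linarith)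
      have := Real.add_one_le_exp (-r'); linarith
    have h2 : (1 + 4 * c) * Real.log n - 0.2032 ≤ r' * T := by
      have h3 : r' * ((1 / 2 + 2 * c) * n * Real.log n) ≤ r' * T :=
        mul_le_mul_of_nonneg_left hT hr0.le
      refine le_trans ?_ h3
      have h4 : r' * ((1 / 2 + 2 * c) * n * Real.log n) = ((1 + 4 * c) * Real.log n) * (n / (n + 90)) := by
        rw [hr']; field_simp; ring
      have h5 : 1 - 90 / (n:ℝ) ≤ n / (n + 90) := by
        rw [le_div_iff₀ (by linarith)]
        have : (1 - 90 / (n:ℝ)) * (n + 90) = n - 8100 / n := by field_simp; ring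
        rw [this]
        have : 0 ≤ 8100 / (n:ℝ) := by positivity
        linarith
      rw [h4]
      have h6 : ((1 + 4 * c) * Real.log n) * (1 - 90 / n) ≤ ((1 + 4 * c) * Real.log n) * (n / (n + 90)) :=
        mul_le_mul_of_nonneg_left h5 (by positivity)
      refine le_trans ?_ h6
      have h7 : ((1 + 4 * c) * Real.log n) * (90 / n) ≤ 0.2032 := by
        rw [mul_div_assoc', div_le_iff₀ hn0]
        have := log_n_bd hn
        nlinarith
      linarith
    have h3 : (1 - r') ^ T ≤ 1.2263 * ((n:ℝ)⁻¹ * u ^ 4) := by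
      refine h1.trans ?_
      have : Real.exp (-(r' * T)) ≤ Real.exp (0.2032) * (Real.exp (-Real.log n) * Real.exp (-(4 * (c * Real.log n)))) := by
        rw [← Real.exp_add, ← Real.exp_add]
        apply Real.exp_le_exp.2; linarith
      refine this.trans ?_
      rw [hu4, hninv]
      apply mul_le_mul_of_nonneg_right (exp02 le_rfl) (by positivity)
    have h4 : n * q ≤ 1.14966 * u ^ 4 := by
      have : n * q ≤ n * (15/16 * (1.2263 * ((n:ℝ)⁻¹ * u ^ 4))) := by
        apply mul_le_mul_of_nonneg_left _ hn0.le
        rw [hq]; linarith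
      refine this.trans ?_
      have e : n * (15/16 * (1.2263 * ((n:ℝ)⁻¹ * u ^ 4))) = 15/16 * 1.2263 * u ^ 4 := by field_simp
      rw [e]
      apply mul_le_mul_of_nonneg_right (by norm_num) (by positivity)
    have hu41 : u ^ 4 ≤ 1 := pow_le_one₀ hu0.le hu1
    have hq1 : q ≤ 0.000281 := by nlinarith
    have h5 : Real.exp (-(q * 1.00029)) ≤ 1 - q := by
      have h6 : Real.exp (-(q * 1.00029)) * (1 + q * 1.00029) ≤ 1 := by
        have := Real.add_one_le_exp (q * 1.00029)
        calc _ ≤ Real.exp (-(q * 1.00029)) * Real.exp (q * 1.00029) := by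
              apply mul_le_mul_of_nonneg_left _ (Real.exp_pos _).le; linarith
          _ = 1 := by rw [← Real.exp_add]; simp
      have h7 : 1 ≤ (1 - q) * (1 + q * 1.00029) := by nlinarith
      by_contra hcon
      push Not at hcon
      nlinarith
    have h6 : Real.exp (-(2.3 * u ^ 4)) ≤ (1 - q) ^ (2 * (n:ℝ) - 3) := by
      calc Real.exp (-(2.3 * u ^ 4)) ≤ Real.exp (-(q * 1.00029) * (2 * (n:ℝ) - 3)) := by
            apply Real.exp_le_exp.2
            have : u ^ 4 > 0 := by positivity
            nlinarith
        _ = Real.exp (-(q * 1.00029)) ^ (2 * (n:ℝ) - 3) := by rw [Real.exp_mul]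
        _ ≤ _ := Real.rpow_le_rpow (Real.exp_pos _).le h5 (by linarith)
    have := final_u u hu1 hu793
    linarith

lemma measurable_dif (k : Fin n) :
    Measurable (fun z : (Fin n × Fin 2 → ℝ) × (Fin n × Fin 2 → ℝ) => dif z k) := by
  unfold dif; fun_prop

lemma measurable_etaC (L : Fin n → Fin n) (i : Fin n) :
    Measurable (fun z : (Fin n × Fin 2 → ℝ) × (Fin n × Fin 2 → ℝ) => etaC L i z) := by
  unfold etaC
  exact (Finset.measurable_sum _ fun k _ => measurable_dif k).neg

lemma measurableSet_InvC (L : Fin n → Fin n) (D : ℝ) : MeasurableSet {z | InvC L D z} := by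
  unfold InvC
  refine MeasurableSet.inter (MeasurableSet.inter (measurable_fst measurableSet_MSet)
    (measurable_snd measurableSet_MSet)) ?_
  have : {z : (Fin n × Fin 2 → ℝ) × (Fin n × Fin 2 → ℝ) |
      ∀ b, ∑ k ∈ blk L b, dif z k = 0 ∧ ∑ k ∈ blk L b, |dif z k| ≤ D} =
      ⋂ b, ({z | ∑ k ∈ blk L b, dif z k = 0} ∩ {z | ∑ k ∈ blk L b, |dif z k| ≤ D}) := by
    ext z; simp
  refine (congrArg MeasurableSet this).mpr ?_
  refine MeasurableSet.iInter fun b => MeasurableSet.inter ?_ ?_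
  · exact measurableSet_eq_fun (Finset.measurable_sum _ fun k _ => measurable_dif k) measurable_const
  · exact measurableSet_le (Finset.measurable_sum _ fun k _ => (measurable_dif k).abs) measurable_const

lemma measurable_lamC (L : Fin n → Fin n) (e : Fin n × Fin n) :
    Measurable (fun p : ((Fin n × Fin 2 → ℝ) × (Fin n × Fin 2 → ℝ)) × (ℝ × ℝ) => lamC L e p.1 p.2) := by
  unfold lamC
  by_cases h : L e.1 = L e.2
  · simp only [h, if_true]; fun_prop
  · simp only [h, if_false]
    have h1 : Measurable (fun z : (Fin n × Fin 2 → ℝ) × (Fin n × Fin 2 → ℝ) =>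
      z.1 (e.1,0) + z.1 (e.2,0)) := by fun_prop
    have h2 : Measurable (fun z : (Fin n × Fin 2 → ℝ) × (Fin n × Fin 2 → ℝ) =>
      z.2 (e.1,0) + z.2 (e.2,0)) := by fun_prop
    have ha := measurable_lenF.comp h1
    have hb := measurable_lenF.comp h2
    have hk := ((measurable_loF.comp h2).add (measurable_etaC L e.1)).sub (measurable_loF.comp h1)
    exact measurable_cpl.comp (((ha.prodMk (hb.prodMk hk)).comp measurable_fst).prodMk measurable_snd)

lemma measurable_stepC (L : Fin n → Fin n) (e : Fin n × Fin n) :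
    Measurable (fun p : ((Fin n × Fin 2 → ℝ) × (Fin n × Fin 2 → ℝ)) × (ℝ × ℝ) => stepC L e p.1 p.2) := by
  unfold stepC
  have hl := measurable_lamC L e
  refine Measurable.prodMk ?_ ?_
  · exact (measurable_stepM e).comp ((measurable_fst.comp measurable_fst).prodMk (measurable_fst.comp hl))
  · exact (measurable_stepM e).comp ((measurable_snd.comp measurable_fst).prodMk (measurable_snd.comp hl))

lemma mp_lamC_fst (L : Fin n → Fin n) (e : Fin n × Fin n) (z : (Fin n × Fin 2 → ℝ) × (Fin n × Fin 2 → ℝ)) :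
    MeasurePreserving (fun w => (lamC L e z w).1) (I01.prod I01) I01 := by
  refine ⟨measurable_fst.comp ((measurable_lamC L e).comp (measurable_const.prodMk measurable_id)), ?_⟩
  unfold lamC
  by_cases h : L e.1 = L e.2
  · simp only [h, if_true]; exact map_fst_unit
  · simp only [h, if_false]; exact map_cpl_fst _ _ _

lemma mp_lamC_snd (L : Fin n → Fin n) (e : Fin n × Fin n) (z : (Fin n × Fin 2 → ℝ) × (Fin n × Fin 2 → ℝ)) :
    MeasurePreserving (fun w => (lamC L e z w).2) (I01.prod I01) I01 := by
  refine ⟨measurable_snd.comp ((measurable_lamC L e).comp (measurable_const.prodMk measurable_id)), ?_⟩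
  unfold lamC
  by_cases h : L e.1 = L e.2
  · simp only [h, if_true]; exact map_fst_unit
  · simp only [h, if_false]; exact map_cpl_snd _ _ _

lemma stepC_snd_law (h : UM n Set.univ = 1) (L : Fin n → Fin n) (e : Fin n × Fin n) (he : e.1 ≠ e.2)
    (μ : Measure ((Fin n × Fin 2 → ℝ) × (Fin n × Fin 2 → ℝ))) [IsProbabilityMeasure μ] (hμ : μ.map Prod.snd = UM n) :
    ((μ.prod (I01.prod I01)).map (fun p => stepC L e p.1 p.2)).map Prod.snd = UM n := by
  have : IsProbabilityMeasure (UM n) := ⟨h⟩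
  have h1 : MeasurePreserving (fun p : ((Fin n × Fin 2 → ℝ) × (Fin n × Fin 2 → ℝ)) × (ℝ × ℝ) =>
      (p.1.2, (lamC L e p.1 p.2).2)) (μ.prod (I01.prod I01)) ((UM n).prod I01) := by
    refine MeasurePreserving.skew_product (f := Prod.snd) (g := fun z w => (lamC L e z w).2) ⟨measurable_snd, hμ⟩ ?_ ?_
    · exact measurable_snd.comp (measurable_lamC L e)
    · exact Filter.Eventually.of_forall fun z => (mp_lamC_snd L e z).map_eq
  rw [Measure.map_map measurable_snd (measurable_stepC L e)]
  rw [← UM_stat h e.1 e.2 he, ← h1.map_eq, Measure.map_map (measurable_stepM _) h1.measurable]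
  rfl

lemma lamC_bd (L : Fin n → Fin n) (e : Fin n × Fin n) (z : (Fin n × Fin 2 → ℝ) × (Fin n × Fin 2 → ℝ)) :
    ∀ᵐ w ∂(I01.prod I01), (0 ≤ (lamC L e z w).1 ∧ (lamC L e z w).1 ≤ 1) ∧
      (0 ≤ (lamC L e z w).2 ∧ (lamC L e z w).2 ≤ 1) :=
  ((mp_lamC_fst L e z).quasiMeasurePreserving.ae I01_ae).and
    ((mp_lamC_snd L e z).quasiMeasurePreserving.ae I01_ae)

/-- one step of the coupling, fibrewise -/
lemma fiber_bd (L : Fin n → Fin n) (e : Fin n × Fin n) (he : e.1 ≠ e.2) (D r : ℝ) (hr : 0 < r) (h2 : 2 * D ≤ r)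
    (z : (Fin n × Fin 2 → ℝ) × (Fin n × Fin 2 → ℝ)) (hz : InvC (mergeL L e) D z)
    (hlen : L e.1 ≠ L e.2 → r ≤ lenF (z.2 (e.1,0) + z.2 (e.2,0))) :
    (I01.prod I01) {w | ¬ InvC L D (stepC L e z w)} ≤
      if L e.1 = L e.2 then 0 else ENNReal.ofReal (9 * D / r) := by
  obtain ⟨i, j⟩ := e
  by_cases h : L i = L j
  · have h' : L (i,j).1 = L (i,j).2 := h
    rw [if_pos h']
    rw [mergeL_same L i j h] at hz
    refine le_of_eq ?_
    have key : ∀ᵐ w ∂(I01.prod I01), InvC L D (stepC L (i,j) z w) := by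
      filter_upwards [lamC_bd L (i,j) z] with w hw
      have hlam : lamC L (i,j) z w = (w.1, w.1) := if_pos h'
      unfold stepC
      rw [hlam] at hw ⊢
      exact inv_unmarked L i j he h D z hz w.1 hw.1.1 hw.1.2
    exact key
  · have h' : ¬ L (i,j).1 = L (i,j).2 := h
    rw [if_neg h']
    obtain ⟨he1, he2⟩ := inv_bounds L i j h D z hz
    have hl := loF_abs (z.2 (i,0) + z.2 (j,0)) (z.1 (i,0) + z.1 (j,0))
    have hA := lenF_abs (z.1 (i,0) + z.1 (j,0)) (z.2 (i,0) + z.2 (j,0))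
    have hf := cpl_fail (lenF (z.1 (i,0) + z.1 (j,0))) (lenF (z.2 (i,0) + z.2 (j,0)))
      (loF (z.2 (i,0) + z.2 (j,0)) + etaC L i z - loF (z.1 (i,0) + z.1 (j,0))) D r hr (hlen h)
      (hA.trans he2) (by
        rw [abs_sub_comm (z.2 (i,0) + z.2 (j,0))] at hl
        have e1 := abs_le.1 (hl.trans he2)
        have e2 := abs_le.1 he1
        rw [abs_le]; constructor <;> linarith) h2
    refine le_trans (measure_mono_ae ?_) hf
    filter_upwards [lamC_bd L (i,j) z] with w hw hbad
    by_contra hgood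
    apply hbad
    have hgood' : lenF (z.1 (i,0) + z.1 (j,0)) * (lamC L (i,j) z w).1 =
      (loF (z.2 (i,0) + z.2 (j,0)) + etaC L i z - loF (z.1 (i,0) + z.1 (j,0))) +
        lenF (z.2 (i,0) + z.2 (j,0)) * (lamC L (i,j) z w).2 := by
      by_contra hne
      apply hgood
      have hlam : lamC L (i,j) z w = cpl (lenF (z.1 (i,0) + z.1 (j,0))) (lenF (z.2 (i,0) + z.2 (j,0)))
        (loF (z.2 (i,0) + z.2 (j,0)) + etaC L i z - loF (z.1 (i,0) + z.1 (j,0))) w := if_neg h'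
      rw [hlam] at hne
      exact hne
    exact inv_marked L i j h D z hz _ _ hw.1.1 hw.1.2 hw.2.1 hw.2.2 hgood'


lemma one_step (h : UM n Set.univ = 1) (hn : 2 ≤ n) (L : Fin n → Fin n) (e : Fin n × Fin n) (he : e.1 ≠ e.2)
    (D r : ℝ) (hr : 0 < r) (hr1 : r ≤ 1) (h2 : 2 * D ≤ r)
    (μ : Measure ((Fin n × Fin 2 → ℝ) × (Fin n × Fin 2 → ℝ))) [IsProbabilityMeasure μ] (hμ : μ.map Prod.snd = UM n) :
    ((μ.prod (I01.prod I01)).map (fun p => stepC L e p.1 p.2)) {z | ¬ InvC L D z} ≤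
      μ {z | ¬ InvC (mergeL L e) D z} +
        if L e.1 = L e.2 then 0 else (ENNReal.ofReal (2 * n * r) + ENNReal.ofReal (9 * D / r)) := by
  have hms : MeasurableSet {z : (Fin n × Fin 2 → ℝ) × (Fin n × Fin 2 → ℝ) | ¬ InvC L D z} :=
    (measurableSet_InvC L D).compl
  rw [Measure.map_apply (measurable_stepC L e) hms, Measure.prod_apply ((measurable_stepC L e) hms)]
  set A : Set ((Fin n × Fin 2 → ℝ) × (Fin n × Fin 2 → ℝ)) := {z | ¬ InvC (mergeL L e) D z} with hA
  have hAm : MeasurableSet A := (measurableSet_InvC _ D).compl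
  set S : Set (Fin n × Fin 2 → ℝ) := {y | lenF (y (e.1,0) + y (e.2,0)) < r} with hS
  have hSm : MeasurableSet S :=
    measurableSet_lt (measurable_lenF.comp (by fun_prop)) measurable_const
  have hSb : μ (Prod.snd ⁻¹' S) ≤ ENNReal.ofReal (2 * n * r) := by
    rw [← Measure.map_apply measurable_snd hSm, hμ]
    exact anti_len h hn e.1 e.2 r hr.le hr1
  by_cases hm : L e.1 = L e.2
  · rw [if_pos hm, add_zero]
    calc _ ≤ ∫⁻ z, A.indicator 1 z ∂μ := by
          refine lintegral_mono fun z => ?_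
          by_cases hz : z ∈ A
          · rw [Set.indicator_of_mem hz]; exact prob_le_one
          · have hz' : InvC (mergeL L e) D z := not_not.1 hz
            have := fiber_bd L e he D r hr h2 z hz' (fun hh => absurd hm hh)
            rw [if_pos hm] at this
            exact this.trans zero_le
      _ = μ A := lintegral_indicator_one hAm
  · rw [if_neg hm]
    calc _ ≤ ∫⁻ z, (A.indicator 1 z + ((Prod.snd ⁻¹' S).indicator 1 z + ENNReal.ofReal (9 * D / r))) ∂μ := by
          refine lintegral_mono fun z => ?_
          by_cases hz : z ∈ A
          · rw [Set.indicator_of_mem hz]; exact prob_le_one.trans le_self_add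
          by_cases hs : z ∈ Prod.snd ⁻¹' S
          · rw [Set.indicator_of_mem hs]
            exact prob_le_one.trans (le_self_add.trans le_add_self)
          have hz' : InvC (mergeL L e) D z := not_not.1 hz
          have := fiber_bd L e he D r hr h2 z hz' (fun _ => not_lt.1 hs)
          rw [if_neg hm] at this
          exact this.trans (le_add_self.trans le_add_self)
      _ = μ A + (μ (Prod.snd ⁻¹' S) + ENNReal.ofReal (9 * D / r)) := by
          rw [lintegral_add_left (measurable_one.indicator hAm),
            lintegral_add_left (measurable_one.indicator (measurable_snd hSm)),
            lintegral_indicator_one hAm, lintegral_indicator_one (measurable_snd hSm)]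
          simp
      _ ≤ _ := by gcongr

/-- labels produced by the future edges -/
def Lab (L : Fin n → Fin n) : (T : ℕ) → (Fin T → Fin n × Fin n) → (Fin n → Fin n)
  | 0, _ => L
  | T + 1, e => mergeL (Lab L T (Fin.tail e)) (e 0)

/-- number of marked times -/
def mkC : (T : ℕ) → (Fin T → Fin n × Fin n) → ℕ
  | 0, _ => 0
  | T + 1, e => mkC T (Fin.tail e) +
      if Lab id T (Fin.tail e) (e 0).1 = Lab id T (Fin.tail e) (e 0).2 then 0 else 1

/-- the final state of the coupling -/
def Zc : (T : ℕ) → (Fin T → Fin n × Fin n) → (Fin n × Fin 2 → ℝ) × (Fin n × Fin 2 → ℝ) →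
    (Fin T → ℝ × ℝ) → (Fin n × Fin 2 → ℝ) × (Fin n × Fin 2 → ℝ)
  | 0, _, z, _ => z
  | T + 1, e, z, w => Zc T (Fin.tail e) (stepC (Lab id T (Fin.tail e)) (e 0) z (w 0)) (Fin.tail w)

/-- the coupled uniform variables along the whole run -/
def Lc : (T : ℕ) → (Fin T → Fin n × Fin n) → (Fin n × Fin 2 → ℝ) × (Fin n × Fin 2 → ℝ) →
    (Fin T → ℝ × ℝ) → (Fin T → ℝ × ℝ)
  | 0, _, _, w => w
  | T + 1, e, z, w => Fin.cons (lamC (Lab id T (Fin.tail e)) (e 0) z (w 0))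
      (Lc T (Fin.tail e) (stepC (Lab id T (Fin.tail e)) (e 0) z (w 0)) (Fin.tail w))

lemma Zc_eq (T : ℕ) : ∀ (e : Fin T → Fin n × Fin n) (z : (Fin n × Fin 2 → ℝ) × (Fin n × Fin 2 → ℝ))
    (w : Fin T → ℝ × ℝ),
    (List.ofFn fun k => (e k, (Lc T e z w k).1)).foldl (stepM n) z.1 = (Zc T e z w).1 ∧
    (List.ofFn fun k => (e k, (Lc T e z w k).2)).foldl (stepM n) z.2 = (Zc T e z w).2 := by
  induction T with
  | zero => intro e z w; simp [Zc]
  | succ T ih =>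
    intro e z w
    have := ih (Fin.tail e) (stepC (Lab id T (Fin.tail e)) (e 0) z (w 0)) (Fin.tail w)
    simp only [List.ofFn_succ, List.foldl_cons, Lc, Zc, Fin.cons_zero, Fin.cons_succ]
    exact this

lemma KL_pos (L : Fin n → Fin n) (hn : 2 ≤ n) : 1 ≤ KL L := by
  unfold KL
  exact Finset.card_pos.2 ⟨L ⟨0, by omega⟩, Finset.mem_image_of_mem _ (Finset.mem_univ _)⟩

lemma mkC_eq (hn : 2 ≤ n) (T : ℕ) : ∀ (e : Fin T → Fin n × Fin n), mkC T e + KL (Lab id T e) = n := by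
  induction T with
  | zero => intro e; simp only [mkC, Lab, KL_id hn]; omega
  | succ T ih =>
    intro e
    have := ih (Fin.tail e)
    have hp := KL_pos (Lab id T (Fin.tail e)) hn
    simp only [mkC, Lab]
    split_ifs with h
    · rw [KL_same _ _ h]; omega
    · rw [KL_merge _ _ h]; omega

lemma measurable_tail' {α : Type*} [MeasurableSpace α] (T : ℕ) :
    Measurable (fun w : Fin (T+1) → α => (Fin.tail w : Fin T → α)) :=
  measurable_pi_lambda _ fun k => measurable_pi_apply _

lemma measurable_Zc (T : ℕ) : ∀ e : Fin T → Fin n × Fin n,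
    Measurable (fun p : ((Fin n × Fin 2 → ℝ) × (Fin n × Fin 2 → ℝ)) × (Fin T → ℝ × ℝ) => Zc T e p.1 p.2) := by
  induction T with
  | zero => intro e; exact measurable_fst
  | succ T ih =>
    intro e
    have h0 : Measurable (fun p : ((Fin n × Fin 2 → ℝ) × (Fin n × Fin 2 → ℝ)) × (Fin (T+1) → ℝ × ℝ) => p.2 0) :=
      (measurable_pi_apply 0).comp measurable_snd
    exact (ih (Fin.tail e)).comp
      (((measurable_stepC (Lab id T (Fin.tail e)) (e 0)).comp (measurable_fst.prodMk h0)).prodMk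
        ((measurable_tail' T).comp measurable_snd))

lemma measurable_cons' {α β : Type*} [MeasurableSpace α] [MeasurableSpace β] (T : ℕ) (f : β → α) (g : β → Fin T → α)
    (hf : Measurable f) (hg : Measurable g) :
    Measurable (fun b => (Fin.cons (f b) (g b) : Fin (T+1) → α)) := by
  refine measurable_pi_lambda _ fun k => ?_
  refine Fin.cases ?_ (fun k => ?_) k
  · simpa using hf
  · simp only [Fin.cons_succ]
    exact (measurable_pi_apply k).comp hg

lemma measurable_Lc (T : ℕ) : ∀ e : Fin T → Fin n × Fin n,
    Measurable (fun p : ((Fin n × Fin 2 → ℝ) × (Fin n × Fin 2 → ℝ)) × (Fin T → ℝ × ℝ) => Lc T e p.1 p.2) := by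
  induction T with
  | zero => intro e; exact measurable_snd
  | succ T ih =>
    intro e
    have h0 : Measurable (fun p : ((Fin n × Fin 2 → ℝ) × (Fin n × Fin 2 → ℝ)) × (Fin (T+1) → ℝ × ℝ) => p.2 0) :=
      (measurable_pi_apply 0).comp measurable_snd
    exact measurable_cons' T _ _ ((measurable_lamC (Lab id T (Fin.tail e)) (e 0)).comp (measurable_fst.prodMk h0))
      ((ih (Fin.tail e)).comp
      (((measurable_stepC (Lab id T (Fin.tail e)) (e 0)).comp (measurable_fst.prodMk h0)).prodMk
        ((measurable_tail' T).comp measurable_snd)))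

lemma mp_split {α : Type*} [MeasurableSpace α] (ρ : Measure α) [IsProbabilityMeasure ρ] (T : ℕ) :
    MeasurePreserving (fun w : Fin (T+1) → α => (w 0, (Fin.tail w : Fin T → α)))
      (Measure.pi fun _ => ρ) (ρ.prod (Measure.pi fun _ => ρ)) := by
  have := measurePreserving_piFinSuccAbove (fun _ : Fin (T+1) => ρ) 0
  exact this

lemma mp_cons {α : Type*} [MeasurableSpace α] (ρ : Measure α) [IsProbabilityMeasure ρ] (T : ℕ) :
    MeasurePreserving (fun p : α × (Fin T → α) => (Fin.cons p.1 p.2 : Fin (T+1) → α))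
      (ρ.prod (Measure.pi fun _ => ρ)) (Measure.pi fun _ => ρ) := by
  have := (measurePreserving_piFinSuccAbove (fun _ : Fin (T+1) => ρ) 0).symm
  convert this using 1
  funext p
  simp [MeasurableEquiv.piFinSuccAbove, Fin.insertNthEquiv]

/-- marginals -/
lemma mp_Lc (π : ℝ × ℝ → ℝ) (hπ : Measurable π)
    (hl : ∀ (L : Fin n → Fin n) e z, MeasurePreserving (fun w => π (lamC L e z w)) (I01.prod I01) I01) (T : ℕ) :
    ∀ (e : Fin T → Fin n × Fin n) (z : (Fin n × Fin 2 → ℝ) × (Fin n × Fin 2 → ℝ)),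
    MeasurePreserving (fun (w : Fin T → ℝ × ℝ) k => π (Lc T e z w k))
      (Measure.pi fun _ => I01.prod I01) (Measure.pi fun _ => I01) := by
  induction T with
  | zero =>
    intro e z
    refine ⟨measurable_pi_lambda _ fun k => k.elim0, ?_⟩
    rw [Measure.pi_of_empty, Measure.pi_of_empty, Measure.map_dirac' (measurable_pi_lambda _ fun k => k.elim0)]
    congr 1
    funext k; exact k.elim0
  | succ T ih =>
    intro e z
    have hst : Measurable (fun w0 : ℝ × ℝ => stepC (Lab id T (Fin.tail e)) (e 0) z w0) :=
      (measurable_stepC _ _).comp (measurable_const.prodMk measurable_id)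
    have h1 : MeasurePreserving (fun p : (ℝ × ℝ) × (Fin T → ℝ × ℝ) =>
        (π (lamC (Lab id T (Fin.tail e)) (e 0) z p.1),
          fun k => π (Lc T (Fin.tail e) (stepC (Lab id T (Fin.tail e)) (e 0) z p.1) p.2 k)))
        ((I01.prod I01).prod (Measure.pi fun _ => I01.prod I01)) (I01.prod (Measure.pi fun _ => I01)) := by
      refine MeasurePreserving.skew_product
        (g := fun (w0 : ℝ × ℝ) (w : Fin T → ℝ × ℝ) k => π (Lc T (Fin.tail e) (stepC (Lab id T (Fin.tail e)) (e 0) z w0) w k))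
        (hl (Lab id T (Fin.tail e)) (e 0) z) ?_ ?_
      · refine measurable_pi_lambda _ fun k => hπ.comp ((measurable_pi_apply k).comp ?_)
        exact (measurable_Lc T (Fin.tail e)).comp ((hst.comp measurable_fst).prodMk measurable_snd)
      · exact Filter.Eventually.of_forall fun w0 => (ih (Fin.tail e) _).map_eq
    have h2 := (mp_cons I01 T).comp (h1.comp (mp_split (I01.prod I01) T))
    convert h2 using 1
    funext w k
    refine Fin.cases ?_ (fun k => ?_) k
    · simp [Lc]
    · simp [Lc]

lemma total_fail (h : UM n Set.univ = 1) (hn : 2 ≤ n)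
    (D r : ℝ) (hr : 0 < r) (hr1 : r ≤ 1) (h2 : 2 * D ≤ r) (T : ℕ) :
    ∀ (e : Fin T → Fin n × Fin n) (_ : ∀ k, (e k).1 ≠ (e k).2)
    (μ : Measure ((Fin n × Fin 2 → ℝ) × (Fin n × Fin 2 → ℝ))) [IsProbabilityMeasure μ] (_ : μ.map Prod.snd = UM n),
    (μ.prod (Measure.pi fun _ : Fin T => I01.prod I01)) {p | ¬ InvC id D (Zc T e p.1 p.2)} ≤
      μ {z | ¬ InvC (Lab id T e) D z} +
        (mkC T e : ENNReal) * (ENNReal.ofReal (2 * n * r) + ENNReal.ofReal (9 * D / r)) := by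
  induction T with
  | zero =>
    intro e _ μ _ _
    refine le_trans ?_ le_self_add
    have : {p : ((Fin n × Fin 2 → ℝ) × (Fin n × Fin 2 → ℝ)) × (Fin 0 → ℝ × ℝ) | ¬ InvC id D (Zc 0 e p.1 p.2)} =
      {z | ¬ InvC id D z} ×ˢ Set.univ := by
      ext p; simp [Zc]
    rw [this, Measure.prod_prod]
    simp [Lab]
  | succ T ih =>
    intro e he μ _ hμ
    set L := Lab id T (Fin.tail e) with hL
    set σ := (μ.prod (I01.prod I01)).map (fun p => stepC L (e 0) p.1 p.2) with hσ
    have hσp : IsProbabilityMeasure σ := Measure.isProbabilityMeasure_map (measurable_stepC L (e 0)).aemeasurable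
    have hσ2 : σ.map Prod.snd = UM n := stepC_snd_law h L (e 0) (he 0) μ hμ
    have h1 := ih (Fin.tail e) (fun k => he k.succ) σ hσ2
    have h3 := one_step h hn L (e 0) (he 0) D r hr hr1 h2 μ hμ
    have hmp : MeasurePreserving (fun p : ((Fin n × Fin 2 → ℝ) × (Fin n × Fin 2 → ℝ)) × (Fin (T+1) → ℝ × ℝ) =>
        (stepC L (e 0) p.1 (p.2 0), (Fin.tail p.2 : Fin T → ℝ × ℝ)))
        (μ.prod (Measure.pi fun _ : Fin (T+1) => I01.prod I01)) (σ.prod (Measure.pi fun _ : Fin T => I01.prod I01)) := by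
      have a1 : MeasurePreserving (fun p : ((Fin n × Fin 2 → ℝ) × (Fin n × Fin 2 → ℝ)) × (ℝ × ℝ) => stepC L (e 0) p.1 p.2)
        (μ.prod (I01.prod I01)) σ := ⟨measurable_stepC L (e 0), rfl⟩
      have a2 := a1.prod (MeasurePreserving.id (Measure.pi fun _ : Fin T => I01.prod I01))
      have a3 := (measurePreserving_prodAssoc μ (I01.prod I01) (Measure.pi fun _ : Fin T => I01.prod I01)).symm
      have a4 := (MeasurePreserving.id μ).prod (mp_split (I01.prod I01) T)
      exact a2.comp (a3.comp a4)
    have hbm : MeasurableSet {p : ((Fin n × Fin 2 → ℝ) × (Fin n × Fin 2 → ℝ)) × (Fin T → ℝ × ℝ) |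
        ¬ InvC id D (Zc T (Fin.tail e) p.1 p.2)} :=
      (measurable_Zc T (Fin.tail e)) (measurableSet_InvC id D).compl
    have h4 := hmp.measure_preimage hbm.nullMeasurableSet
    calc _ = (σ.prod (Measure.pi fun _ : Fin T => I01.prod I01)) {p | ¬ InvC id D (Zc T (Fin.tail e) p.1 p.2)} := h4
      _ ≤ _ := h1
      _ ≤ _ := add_le_add_left h3 _
      _ = _ := by
        simp only [mkC, ← hL]
        have : Lab id (T+1) e = mergeL L (e 0) := rfl
        rw [this]
        split_ifs <;> push_cast <;> ring

lemma Lab_last (T : ℕ) : ∀ (L : Fin n → Fin n) (e : Fin (T+1) → Fin n × Fin n),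
    Lab L (T+1) e = Lab (mergeL L (e (Fin.last T))) T (Fin.init e) := by
  induction T with
  | zero => intro L e; rfl
  | succ T ih =>
    intro L e
    have h1 : Lab L (T+2) e = mergeL (Lab L (T+1) (Fin.tail e)) (e 0) := rfl
    rw [h1, ih L (Fin.tail e)]
    have h2 : Lab (mergeL L (e (Fin.last (T+1)))) (T+1) (Fin.init e) =
      mergeL (Lab (mergeL L (e (Fin.last (T+1)))) T (Fin.tail (Fin.init e))) (Fin.init e 0) := rfl
    rw [h2, Fin.tail_init_eq_init_tail]
    rfl

lemma pairs_card_pos (hn : 2 ≤ n) : 0 < (pairsF n).card := by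
  refine Finset.card_pos.2 ⟨(⟨0, by omega⟩, ⟨1, by omega⟩), ?_⟩
  simp [pairsF]

lemma nu_prob (hn : 2 ≤ n) : IsProbabilityMeasure (unifOn (pairsF n)) := by
  constructor
  have h := pairs_card_pos hn
  simp only [unifOn, Measure.smul_apply, Measure.finsetSum_apply, measure_univ, Finset.sum_const, nsmul_eq_mul, mul_one,
    smul_eq_mul]
  exact ENNReal.inv_mul_cancel (by exact_mod_cast h.ne') (ENNReal.natCast_ne_top _)

lemma Dr_nonneg (T : ℕ) : ∀ L : Fin n → Fin n, 0 ≤ Dr T L := by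
  induction T with
  | zero => intro L; simp only [Dr]; split_ifs <;> norm_num
  | succ T ih =>
    intro L; simp only [Dr]
    exact mul_nonneg (by positivity) (Finset.sum_nonneg fun e _ => ih _)

lemma mp_split_last {α : Type*} [MeasurableSpace α] (ρ : Measure α) [IsProbabilityMeasure ρ] (T : ℕ) :
    MeasurePreserving (fun w : Fin (T+1) → α => (w (Fin.last T), (Fin.init w : Fin T → α)))
      (Measure.pi fun _ => ρ) (ρ.prod (Measure.pi fun _ => ρ)) := by
  have := measurePreserving_piFinSuccAbove (fun _ : Fin (T+1) => ρ) (Fin.last T)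
  convert this using 1
  funext w
  simp [MeasurableEquiv.piFinSuccAbove, Fin.insertNthEquiv]

lemma Dr_measure (hn : 2 ≤ n) (T : ℕ) : ∀ L : Fin n → Fin n,
    (Measure.pi fun _ : Fin T => unifOn (pairsF n)) {e | 1 < KL (Lab L T e)} = ENNReal.ofReal (Dr T L) := by
  have := nu_prob hn
  induction T with
  | zero =>
    intro L
    simp only [Lab, Dr]
    split_ifs with h
    · simp [h]
    · simp [h]
  | succ T ih =>
    intro L
    have h1 := (mp_split_last (unifOn (pairsF n)) T).measure_preimage
      (s := {p | 1 < KL (Lab (mergeL L p.1) T p.2)}) (MeasurableSet.of_discrete).nullMeasurableSet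
    have h2 : {e : Fin (T+1) → Fin n × Fin n | 1 < KL (Lab L (T+1) e)} =
      (fun w : Fin (T+1) → Fin n × Fin n => (w (Fin.last T), (Fin.init w : Fin T → Fin n × Fin n))) ⁻¹'
        {p | 1 < KL (Lab (mergeL L p.1) T p.2)} := by
      ext e
      change 1 < KL (Lab L (T+1) e) ↔ 1 < KL (Lab (mergeL L (e (Fin.last T))) T (Fin.init e))
      rw [Lab_last]
    rw [h2, h1, Measure.prod_apply MeasurableSet.of_discrete]
    have h3 : ∀ x : Fin n × Fin n, (Measure.pi fun _ : Fin T => unifOn (pairsF n))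
      (Prod.mk x ⁻¹' {p : (Fin n × Fin n) × (Fin T → Fin n × Fin n) | 1 < KL (Lab (mergeL L p.1) T p.2)}) =
        ENNReal.ofReal (Dr T (mergeL L x)) := fun x => ih (mergeL L x)
    simp only [h3]
    conv_lhs => arg 1; unfold unifOn
    rw [lintegral_smul_measure, lintegral_finsetSum_measure]
    simp only [lintegral_dirac, Dr, smul_eq_mul]
    rw [ENNReal.ofReal_mul (by positivity), ENNReal.ofReal_sum_of_nonneg (fun e _ => Dr_nonneg T _),
      ENNReal.ofReal_inv_of_pos (by exact_mod_cast pairs_card_pos hn), ENNReal.ofReal_natCast]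

lemma nu_ae (hn : 2 ≤ n) (T : ℕ) :
    ∀ᵐ e ∂(Measure.pi fun _ : Fin T => unifOn (pairsF n)), ∀ k, (e k).1 ≠ (e k).2 := by
  have := nu_prob hn
  rw [ae_all_iff]
  intro k
  have h : ∀ᵐ e ∂(unifOn (pairsF n)), e.1 ≠ e.2 := by
    rw [ae_iff]
    simp only [unifOn, Measure.smul_apply, Measure.finsetSum_apply, smul_eq_mul]
    rw [Finset.sum_eq_zero, mul_zero]
    intro e he
    rw [Measure.dirac_apply' _ MeasurableSet.of_discrete]
    have : e.1 < e.2 := by simpa [pairsF] using he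
    simp [this.ne]
  exact (measurePreserving_eval (fun _ : Fin T => unifOn (pairsF n)) k).quasiMeasurePreserving.ae h

/-- the path functional -/
def Fp (n T : ℕ) (p : (Fin n × Fin 2 → ℝ) × (Fin T → (Fin n × Fin n) × ℝ)) : Fin (T + 1) → Fin n × Fin 2 → ℝ :=
  fun s : Fin (T + 1) => ((List.ofFn p.2).take s).foldl (stepM n) p.1

lemma measurable_stepM_joint :
    Measurable (fun p : (Fin n × Fin 2 → ℝ) × ((Fin n × Fin n) × ℝ) => stepM n p.1 p.2) := by
  have h : Measurable (fun q : (Fin n × Fin n) × ((Fin n × Fin 2 → ℝ) × ℝ) => stepM n q.2.1 (q.1, q.2.2)) :=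
    measurable_from_prod_countable_right fun e => measurable_stepM e
  exact h.comp (f := fun p : (Fin n × Fin 2 → ℝ) × ((Fin n × Fin n) × ℝ) => (p.2.1, (p.1, p.2.2))) (by fun_prop)

lemma measurable_fold (T : ℕ) : ∀ s : ℕ,
    Measurable (fun p : (Fin n × Fin 2 → ℝ) × (Fin T → (Fin n × Fin n) × ℝ) =>
      ((List.ofFn p.2).take s).foldl (stepM n) p.1) := by
  induction T with
  | zero => intro s; simpa using measurable_fst
  | succ T ih =>
    intro s
    cases s with
    | zero => simpa using measurable_fst
    | succ s =>
      simp only [List.ofFn_succ, List.take_succ_cons, List.foldl_cons]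
      have h0 : Measurable (fun p : (Fin n × Fin 2 → ℝ) × (Fin (T+1) → (Fin n × Fin n) × ℝ) => p.2 0) :=
        (measurable_pi_apply 0).comp measurable_snd
      exact (ih s).comp ((measurable_stepM_joint.comp (measurable_fst.prodMk h0)).prodMk
        ((measurable_tail' T).comp measurable_snd))

lemma measurable_Fp (T : ℕ) : Measurable (Fp n T) :=
  measurable_pi_lambda _ fun s => measurable_fold T s

lemma measurable_pairing (T : ℕ) (πv : (Fin n × Fin 2 → ℝ) × (Fin n × Fin 2 → ℝ) → (Fin n × Fin 2 → ℝ)) (hv : Measurable πv)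
    (π : ℝ × ℝ → ℝ) (hπ : Measurable π) :
    Measurable (fun q : (Fin T → Fin n × Fin n) × (((Fin n × Fin 2 → ℝ) × (Fin n × Fin 2 → ℝ)) × (Fin T → ℝ × ℝ)) =>
      (πv q.2.1, fun k => π (Lc T q.1 q.2.1 q.2.2 k))) := by
  refine measurable_from_prod_countable_right fun e => ?_
  refine (hv.comp measurable_fst).prodMk ?_
  exact measurable_pi_lambda _ fun k => hπ.comp ((measurable_pi_apply k).comp (measurable_Lc T e))

lemma marg (hn : 2 ≤ n) (T : ℕ) (πv : (Fin n × Fin 2 → ℝ) × (Fin n × Fin 2 → ℝ) → (Fin n × Fin 2 → ℝ)) (hv : Measurable πv)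
    (π : ℝ × ℝ → ℝ) (hπ : Measurable π)
    (hl : ∀ (L : Fin n → Fin n) e z, MeasurePreserving (fun w => π (lamC L e z w)) (I01.prod I01) I01)
    (μ : Measure ((Fin n × Fin 2 → ℝ) × (Fin n × Fin 2 → ℝ))) [IsProbabilityMeasure μ] :
    MeasurePreserving (fun q : (Fin T → Fin n × Fin n) × (((Fin n × Fin 2 → ℝ) × (Fin n × Fin 2 → ℝ)) × (Fin T → ℝ × ℝ)) =>
      Fp n T (πv q.2.1, fun k => (q.1 k, π (Lc T q.1 q.2.1 q.2.2 k))))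
      ((Measure.pi fun _ : Fin T => unifOn (pairsF n)).prod (μ.prod (Measure.pi fun _ : Fin T => I01.prod I01)))
      (pathM n T (μ.map πv)) := by
  have := nu_prob hn
  have hpm : IsProbabilityMeasure (μ.map πv) := Measure.isProbabilityMeasure_map hv.aemeasurable
  have h1 : ∀ e : Fin T → Fin n × Fin n, MeasurePreserving
      (fun q : (((Fin n × Fin 2 → ℝ) × (Fin n × Fin 2 → ℝ)) × (Fin T → ℝ × ℝ)) =>
        (πv q.1, fun k => π (Lc T e q.1 q.2 k)))
      (μ.prod (Measure.pi fun _ : Fin T => I01.prod I01)) ((μ.map πv).prod (Measure.pi fun _ : Fin T => I01)) := by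
    intro e
    refine MeasurePreserving.skew_product (g := fun z (w : Fin T → ℝ × ℝ) k => π (Lc T e z w k)) ⟨hv, rfl⟩ ?_ ?_
    · exact measurable_pi_lambda _ fun k => hπ.comp ((measurable_pi_apply k).comp (measurable_Lc T e))
    · exact Filter.Eventually.of_forall fun z => (mp_Lc π hπ hl T e z).map_eq
  have h2 : MeasurePreserving
      (fun q : (Fin T → Fin n × Fin n) × (((Fin n × Fin 2 → ℝ) × (Fin n × Fin 2 → ℝ)) × (Fin T → ℝ × ℝ)) =>
        (q.1, ((πv q.2.1, fun k => π (Lc T q.1 q.2.1 q.2.2 k)) : (Fin n × Fin 2 → ℝ) × (Fin T → ℝ))))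
      ((Measure.pi fun _ : Fin T => unifOn (pairsF n)).prod (μ.prod (Measure.pi fun _ : Fin T => I01.prod I01)))
      ((Measure.pi fun _ : Fin T => unifOn (pairsF n)).prod ((μ.map πv).prod (Measure.pi fun _ : Fin T => I01))) := by
    refine MeasurePreserving.skew_product (f := id)
      (g := fun e (q : (((Fin n × Fin 2 → ℝ) × (Fin n × Fin 2 → ℝ)) × (Fin T → ℝ × ℝ))) =>
        ((πv q.1, fun k => π (Lc T e q.1 q.2 k)) : (Fin n × Fin 2 → ℝ) × (Fin T → ℝ))) (MeasurePreserving.id _)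
      (measurable_pairing T πv hv π hπ) ?_
    exact Filter.Eventually.of_forall fun e => (h1 e).map_eq
  have h3 := (measurePreserving_prodAssoc (Measure.pi fun _ : Fin T => unifOn (pairsF n)) (μ.map πv)
    (Measure.pi fun _ : Fin T => I01)).symm
  have h4 := (Measure.measurePreserving_swap (μ := Measure.pi fun _ : Fin T => unifOn (pairsF n)) (ν := μ.map πv)).prod
    (MeasurePreserving.id (Measure.pi fun _ : Fin T => I01))
  have h5 := measurePreserving_prodAssoc (μ.map πv) (Measure.pi fun _ : Fin T => unifOn (pairsF n))
    (Measure.pi fun _ : Fin T => I01)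
  have h6 := (MeasurePreserving.id (μ.map πv)).prod
    (measurePreserving_arrowProdEquivProdArrow (Fin n × Fin n) ℝ (Fin T) (fun _ => unifOn (pairsF n)) (fun _ => I01)).symm
  have h7 := h6.comp (h5.comp (h4.comp (h3.comp h2)))
  have h8 : MeasurePreserving (Fp n T) ((μ.map πv).prod (Measure.pi fun _ : Fin T => (unifOn (pairsF n)).prod I01))
      (pathM n T (μ.map πv)) := ⟨measurable_Fp T, rfl⟩
  exact h8.comp h7

lemma KL_const (L : Fin n → Fin n) (h : ¬ 1 < KL L) : ∀ k k', L k = L k' := by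
  intro k k'
  have h' : (Finset.univ.image L).card ≤ 1 := not_lt.1 h
  exact Finset.card_le_one.1 h' _ (Finset.mem_image_of_mem _ (Finset.mem_univ _)) _
    (Finset.mem_image_of_mem _ (Finset.mem_univ _))

lemma num_bd (hn : 4096 ≤ n) (a : ℝ) (ha : 7.5 < a) (m : ℕ) (hm : m ≤ n) :
    (m : ENNReal) * (ENNReal.ofReal (2 * n * (n:ℝ) ^ (-(a/2))) + ENNReal.ofReal (9 * (n:ℝ) ^ (-a) / (n:ℝ) ^ (-(a/2))))
      ≤ ENNReal.ofReal (10 * (n : ℝ) ^ (3.75 - a / 2)) := by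
  have hN : (4096:ℝ) ≤ n := by exact_mod_cast hn
  have hN0 : (0:ℝ) < n := by linarith
  have hr : 0 < (n:ℝ) ^ (-(a/2)) := Real.rpow_pos_of_pos hN0 _
  have hD : (n:ℝ) ^ (-a) = (n:ℝ) ^ (-(a/2)) * (n:ℝ) ^ (-(a/2)) := by
    rw [← Real.rpow_add hN0]; congr 1; ring
  rw [hD, ← ENNReal.ofReal_add (by positivity) (by positivity), ← ENNReal.ofReal_natCast, ← ENNReal.ofReal_mul (by positivity)]
  apply ENNReal.ofReal_le_ofReal
  have h1 : 9 * ((n:ℝ) ^ (-(a/2)) * (n:ℝ) ^ (-(a/2))) / (n:ℝ) ^ (-(a/2)) = 9 * (n:ℝ) ^ (-(a/2)) := by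
    field_simp
  rw [h1]
  have h2 : (n:ℝ) ^ (3.75 - a/2) = (n:ℝ) ^ (3.75:ℝ) * (n:ℝ) ^ (-(a/2)) := by
    rw [← Real.rpow_add hN0]; congr 1
  have h3 : (n:ℝ) ^ 2 ≤ (n:ℝ) ^ (3.75:ℝ) := by
    rw [← Real.rpow_natCast]
    exact Real.rpow_le_rpow_of_exponent_le (by linarith) (by norm_num)
  rw [h2]
  have hm' : (m:ℝ) ≤ n := by exact_mod_cast hm
  calc (m:ℝ) * (2 * n * (n:ℝ) ^ (-(a/2)) + 9 * (n:ℝ) ^ (-(a/2)))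
      ≤ n * (2 * n * (n:ℝ) ^ (-(a/2)) + 9 * (n:ℝ) ^ (-(a/2))) := by gcongr
    _ = (2 * n ^ 2 + 9 * n) * (n:ℝ) ^ (-(a/2)) := by ring
    _ ≤ (10 * (n:ℝ) ^ (3.75:ℝ)) * (n:ℝ) ^ (-(a/2)) := by
      refine mul_le_mul_of_nonneg_right ?_ hr.le
      nlinarith
    _ = _ := by ring

lemma r_bd (hn : 4096 ≤ n) (a : ℝ) (ha : 7.5 < a) :
    0 < (n:ℝ) ^ (-(a/2)) ∧ (n:ℝ) ^ (-(a/2)) ≤ 1 ∧ 2 * (n:ℝ) ^ (-a) ≤ (n:ℝ) ^ (-(a/2)) := by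
  have hN : (4096:ℝ) ≤ n := by exact_mod_cast hn
  have hN0 : (0:ℝ) < n := by linarith
  have hr : 0 < (n:ℝ) ^ (-(a/2)) := Real.rpow_pos_of_pos hN0 _
  have hD : (n:ℝ) ^ (-a) = (n:ℝ) ^ (-(a/2)) * (n:ℝ) ^ (-(a/2)) := by
    rw [← Real.rpow_add hN0]; congr 1; ring
  have h1 : (n:ℝ) ^ (-(a/2)) ≤ 1/2 := by
    have : (n:ℝ) ^ (-(a/2)) ≤ (n:ℝ) ^ (-1:ℝ) := Real.rpow_le_rpow_of_exponent_le (by linarith) (by linarith)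
    rw [Real.rpow_neg_one] at this
    refine this.trans ?_
    rw [inv_le_comm₀ hN0 (by norm_num)]
    linarith
  refine ⟨hr, by linarith, ?_⟩
  rw [hD]; nlinarith

lemma Fp_last (T : ℕ) (p : (Fin n × Fin 2 → ℝ) × (Fin T → (Fin n × Fin n) × ℝ)) :
    Fp n T p (Fin.last T) = (List.ofFn p.2).foldl (stepM n) p.1 := by
  unfold Fp
  rw [List.take_of_length_le (by simp)]

lemma Fp_zero (T : ℕ) (p : (Fin n × Fin 2 → ℝ) × (Fin T → (Fin n × Fin n) × ℝ)) :
    Fp n T p 0 = p.1 := by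
  simp [Fp]

end helpers

/-- Coupling for nearby points on narrow matrices: if `Y₀` is stationary and
`‖X₀ - Y₀‖₁ ≤ n^{-a}` almost surely, then there is a coupling of the two path laws
over `T ≥ (1/2 + 2c) n log n` steps under which `P[X_T ≠ Y_T] ≤ 10 n^{3.75 - a/2} + n^{-c}`. -/
theorem narrow_matrices_coupling_for_nearby_points
    (n : ℕ) (a c : ℝ) (ha : 7.5 < a) (hc : 0 < c)
    (hn1 : max 4096 (a + 3.5) < (n : ℝ))
    (hn2 : 3 * (1 + 2 * c) * (1 / 2 + 2 * c) / c < (n : ℝ) / Real.log n)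
    (μ₀ : Measure ((Fin n × Fin 2 → ℝ) × (Fin n × Fin 2 → ℝ))) [IsProbabilityMeasure μ₀]
    (hsupp : ∀ᵐ p ∂μ₀, p.1 ∈ MSet n ∧ p.2 ∈ MSet n)
    (hstat : μ₀.map Prod.snd = UM n)
    (hclose : ∀ᵐ p ∂μ₀, ∑ q : Fin n × Fin 2, |p.1 q - p.2 q| ≤ (n : ℝ) ^ (-a))
    (T : ℕ) (hT : (1 / 2 + 2 * c) * n * Real.log n ≤ (T : ℝ)) :
    ∃ P : Measure ((Fin (T + 1) → Fin n × Fin 2 → ℝ) × (Fin (T + 1) → Fin n × Fin 2 → ℝ)),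
      P.map Prod.fst = pathM n T (μ₀.map Prod.fst) ∧
      P.map Prod.snd = pathM n T (μ₀.map Prod.snd) ∧
      P.map (fun q => (q.1 0, q.2 0)) = μ₀ ∧
      P {q | q.1 (Fin.last T) ≠ q.2 (Fin.last T)} ≤
        ENNReal.ofReal (10 * (n : ℝ) ^ (3.75 - a / 2) + (n : ℝ) ^ (-c)) := by
  have hn : 4096 ≤ n := by
    have h : (4096:ℝ) < n := lt_of_le_of_lt (le_max_left _ _) hn1
    exact_mod_cast h.le
  have hn' : 2 ≤ n := by omega
  have hUM : UM n Set.univ = 1 := by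
    rw [← hstat, Measure.map_apply measurable_snd MeasurableSet.univ]
    simp
  have hnu := nu_prob hn'
  obtain ⟨hr0, hr1, hr2⟩ := r_bd hn a ha
  have m1 := marg hn' T Prod.fst measurable_fst Prod.fst measurable_fst (fun L e z => mp_lamC_fst L e z) μ₀
  have m2 := marg hn' T Prod.snd measurable_snd Prod.snd measurable_snd (fun L e z => mp_lamC_snd L e z) μ₀
  set Q := ((Measure.pi fun _ : Fin T => unifOn (pairsF n)).prod
    (μ₀.prod (Measure.pi fun _ : Fin T => I01.prod I01))) with hQ
  have mΦ := m1.measurable.prodMk m2.measurable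
  refine ⟨Q.map (fun q => (Fp n T (q.2.1.1, fun k => (q.1 k, (Lc T q.1 q.2.1 q.2.2 k).1)),
      Fp n T (q.2.1.2, fun k => (q.1 k, (Lc T q.1 q.2.1 q.2.2 k).2)))), ?_, ?_, ?_, ?_⟩
  · rw [Measure.map_map measurable_fst mΦ]
    exact m1.map_eq
  · rw [Measure.map_map measurable_snd mΦ]
    exact m2.map_eq
  · rw [Measure.map_map (by fun_prop) mΦ]
    have h1 : MeasurePreserving (fun q : (Fin T → Fin n × Fin n) ×
        (((Fin n × Fin 2 → ℝ) × (Fin n × Fin 2 → ℝ)) × (Fin T → ℝ × ℝ)) => q.2.1) Q μ₀ :=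
      measurePreserving_fst.comp measurePreserving_snd
    refine Eq.trans ?_ h1.map_eq
    congr 1
  · have hB : MeasurableSet {q : (Fin (T + 1) → Fin n × Fin 2 → ℝ) × (Fin (T + 1) → Fin n × Fin 2 → ℝ) |
        q.1 (Fin.last T) ≠ q.2 (Fin.last T)} :=
      (measurableSet_eq_fun (by fun_prop) (by fun_prop)).compl
    rw [Measure.map_apply mΦ hB, hQ, Measure.prod_apply (mΦ hB)]
    set C : Set (Fin T → Fin n × Fin n) := {e | 1 < KL (Lab id T e)} with hC
    have hCm : MeasurableSet C := MeasurableSet.of_discrete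
    calc _ ≤ ∫⁻ e, (C.indicator 1 e + ENNReal.ofReal (10 * (n : ℝ) ^ (3.75 - a / 2)))
          ∂(Measure.pi fun _ : Fin T => unifOn (pairsF n)) := by
          refine lintegral_mono_ae ?_
          filter_upwards [nu_ae hn' T] with e he
          by_cases heC : e ∈ C
          · rw [Set.indicator_of_mem heC]; exact prob_le_one.trans le_self_add
          refine le_trans ?_ le_add_self
          have hconst := KL_const _ heC
          have hzero : μ₀ {z | ¬ InvC (Lab id T e) ((n:ℝ) ^ (-a)) z} = 0 := by
            have key : ∀ᵐ z ∂μ₀, InvC (Lab id T e) ((n:ℝ) ^ (-a)) z := by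
              filter_upwards [hsupp, hclose] with z hz hz'
              refine inv_start _ _ hconst z hz hz'
            exact key
          have htot := total_fail hUM hn' _ _ hr0 hr1 hr2 T e he μ₀ hstat
          rw [hzero, zero_add] at htot
          have hmk : mkC T e ≤ n := by have := mkC_eq hn' T e; omega
          refine le_trans (measure_mono ?_) (htot.trans (num_bd hn a ha _ hmk))
          intro p hp hInv
          apply hp
          have hz := Zc_eq T e p.1 p.2
          change Fp n T _ (Fin.last T) = Fp n T _ (Fin.last T)
          rw [Fp_last, Fp_last]
          refine hz.1.trans (Eq.trans ?_ hz.2.symm)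
          exact inv_end _ _ hInv
      _ = ENNReal.ofReal (Dr T (id : Fin n → Fin n)) + ENNReal.ofReal (10 * (n : ℝ) ^ (3.75 - a / 2)) := by
          rw [lintegral_add_left (measurable_one.indicator hCm), lintegral_indicator_one hCm]
          rw [hC, Dr_measure hn' T id]
          simp
      _ ≤ _ := by
          rw [ENNReal.ofReal_add (by positivity) (by positivity), add_comm]
          gcongr
          exact Dr_final hn c hc T hT

end
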